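/- arXiv:2011.05170 — 6 statements merged into one kernel-verified Lean document; each statement's English description precedes it below -/
import Mathlib

section
/- Let φ be a finite nonnegative Borel measure on X×Y all of whose moments φ_d := ∫_{X×Y} x^{d_x} y^{d_y} dφ(x,y) are finite, and suppose φ_{(d_x,0)} = λ_{d_x} and φ_{(d_x,1)} = μ_{(d_x,1)} for all d_x ∈ ℕ^n. Then φ_d ≥ μ_d for every d ∈ ℕ^n × ℕ. -/
open MeasureTheory Set

noncomputable section

/-!
Writing `𝔼[y | x]` for the conditional expectation under `φ`, the moments of order `(d_x, 0)` and
`(d_x, 1)` say that the first marginal of `φ` is `λ` and that `𝔼[y | x] = f x`, because polynomials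
are dense in the continuous functions on a compact set (Stone–Weierstrass). The conditional Jensen
inequality for the convex function `y ↦ y ^ k` on `[0, ∞)` then gives `f x ^ k ≤ 𝔼[y ^ k | x]`, and
integrating this against the nonnegative weight `x ^ d_x` is the claim.
-/

section Polynomials

variable {ι : Type*} {X : Set (ι → ℝ)}

theorem exists_mvPolynomial_near_of_isCompact (hX : IsCompact X) (u : C(ι → ℝ, ℝ)) {ε : ℝ}
    (hε : 0 < ε) : ∃ p : MvPolynomial ι ℝ, ∀ x ∈ X, ‖p.eval x - u x‖ < ε := by
  let coord (i : ι) : C(ι → ℝ, ℝ) := ⟨fun x => x i, continuous_apply i⟩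
  let toFun : MvPolynomial ι ℝ →ₐ[ℝ] C(ι → ℝ, ℝ) := MvPolynomial.aeval coord
  have toFun_apply (p : MvPolynomial ι ℝ) (x : ι → ℝ) : toFun p x = p.eval x := by
    induction p using MvPolynomial.induction_on with
    | C a => simp [toFun]
    | add p q hp hq => simp [hp, hq]
    | mul_X p i hp => simp [hp, toFun, coord]
  have separates : toFun.range.SeparatesPoints := by
    intro x y hxy
    obtain ⟨i, hi⟩ := Function.ne_iff.1 hxy
    exact ⟨coord i, ⟨coord i, ⟨.X i, by simp [toFun]⟩, rfl⟩, hi⟩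
  obtain ⟨-, ⟨p, rfl⟩, hp⟩ :=
    ContinuousMap.exists_mem_subalgebra_near_continuous_of_isCompact_of_separatesPoints
      separates u hX hε
  exact ⟨p, fun x hx => toFun_apply p x ▸ hp x hx⟩

theorem integral_eval_mul [Fintype ι] {μ : Measure (ι → ℝ)} {g : (ι → ℝ) → ℝ}
    (hg : ∀ d : ι → ℕ, Integrable (fun x => (∏ i, x i ^ d i) * g x) μ) (p : MvPolynomial ι ℝ) :
    ∫ x, p.eval x * g x ∂μ = ∑ d ∈ p.support, p.coeff d * ∫ x, (∏ i, x i ^ d i) * g x ∂μ := by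
  simp only [MvPolynomial.eval_eq', Finset.sum_mul, mul_assoc]
  rw [integral_finsetSum]
  · simp only [integral_const_mul]
  · exact fun d _ => (hg d).const_mul _

end Polynomials

section Determinacy

section Integrability

variable {α : Type*} [TopologicalSpace α] [MeasurableSpace α] [OpensMeasurableSpace α] {K : Set α}
  {u : α → ℝ}

theorem integrable_continuous_comp_mul {Ω : Type*} [MeasurableSpace Ω] {P : Measure Ω}
    (hK : IsCompact K) {T : Ω → α} (hT : Measurable T) (hTK : ∀ᵐ ω ∂P, T ω ∈ K)
    (hu : Continuous u) {g : Ω → ℝ} (hg : Integrable g P) :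
    Integrable (fun ω => u (T ω) * g ω) P := by
  obtain ⟨C, hC⟩ := hK.exists_bound_of_continuousOn hu.continuousOn
  exact hg.bdd_mul (hu.measurable.comp hT).aestronglyMeasurable
    (hTK.mono fun ω hω => hC (T ω) hω)

theorem integrable_continuous_mul {μ : Measure α} (hK : IsCompact K) (hμ : ∀ᵐ x ∂μ, x ∈ K)
    (hu : Continuous u) {g : α → ℝ} (hg : Integrable g μ) : Integrable (fun x => u x * g x) μ :=
  integrable_continuous_comp_mul hK measurable_id hμ hu hg

theorem norm_integral_mul_sub_integral_mul_le {μ : Measure α} (hK : IsCompact K)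
    (hμ : ∀ᵐ x ∂μ, x ∈ K) {v g : α → ℝ} (hu : Continuous u) (hv : Continuous v)
    (hg : Integrable g μ) {ε : ℝ} (huv : ∀ x ∈ K, ‖u x - v x‖ ≤ ε) :
    ‖∫ x, u x * g x ∂μ - ∫ x, v x * g x ∂μ‖ ≤ ε * ∫ x, ‖g x‖ ∂μ := by
  rw [← integral_sub (integrable_continuous_mul hK hμ hu hg)
    (integrable_continuous_mul hK hμ hv hg), ← integral_const_mul]
  refine norm_integral_le_of_norm_le (hg.norm.const_mul ε) ?_
  filter_upwards [hμ] with x hx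
  rw [← sub_mul, norm_mul]
  exact mul_le_mul_of_nonneg_right (huv x hx) (norm_nonneg _)

end Integrability

variable {ι : Type*} [Fintype ι] {X : Set (ι → ℝ)} {μ ν : Measure (ι → ℝ)}

theorem integral_continuous_mul_eq_of_moments_eq (hX : IsCompact X) (hμ : ∀ᵐ x ∂μ, x ∈ X)
    (hν : ∀ᵐ x ∂ν, x ∈ X) {g h : (ι → ℝ) → ℝ} (hg : Integrable g μ) (hh : Integrable h ν)
    (moments_eq : ∀ d : ι → ℕ,
      ∫ x, (∏ i, x i ^ d i) * g x ∂μ = ∫ x, (∏ i, x i ^ d i) * h x ∂ν)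
    {u : (ι → ℝ) → ℝ} (hu : Continuous u) :
    ∫ x, u x * g x ∂μ = ∫ x, u x * h x ∂ν := by
  have polynomial_eq (p : MvPolynomial ι ℝ) :
      ∫ x, p.eval x * g x ∂μ = ∫ x, p.eval x * h x ∂ν := by
    rw [integral_eval_mul fun d => integrable_continuous_mul hX hμ (by fun_prop) hg,
      integral_eval_mul fun d => integrable_continuous_mul hX hν (by fun_prop) hh]
    simp only [moments_eq]
  set C : ℝ := (∫ x, ‖g x‖ ∂μ) + ∫ x, ‖h x‖ ∂ν
  have C_add_one_pos : 0 < C + 1 := add_pos_of_nonneg_of_pos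
    (add_nonneg (integral_nonneg fun _ => norm_nonneg _) (integral_nonneg fun _ => norm_nonneg _))
    one_pos
  refine eq_of_forall_dist_le fun δ hδ => ?_
  obtain ⟨p, hp⟩ := exists_mvPolynomial_near_of_isCompact hX ⟨u, hu⟩ (div_pos hδ C_add_one_pos)
  have hpc : Continuous fun x => p.eval x := MvPolynomial.continuous_eval p
  have near_μ := norm_integral_mul_sub_integral_mul_le hX hμ hpc hu hg fun x hx => (hp x hx).le
  have near_ν := norm_integral_mul_sub_integral_mul_le hX hν hpc hu hh fun x hx => (hp x hx).le
  calc dist (∫ x, u x * g x ∂μ) (∫ x, u x * h x ∂ν)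
      ≤ dist (∫ x, u x * g x ∂μ) (∫ x, p.eval x * g x ∂μ)
        + dist (∫ x, p.eval x * g x ∂μ) (∫ x, u x * h x ∂ν) := dist_triangle _ _ _
    _ ≤ δ / (C + 1) * (∫ x, ‖g x‖ ∂μ) + δ / (C + 1) * ∫ x, ‖h x‖ ∂ν := by
        rw [dist_comm, dist_eq_norm, polynomial_eq, dist_eq_norm]
        rw [polynomial_eq] at near_μ
        exact add_le_add near_μ near_ν
    _ = δ * (C / (C + 1)) := by rw [← mul_add]; ring
    _ ≤ δ := mul_le_of_le_one_right hδ.le ((div_le_one C_add_one_pos).2 (by linarith))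

theorem measure_eq_of_moments_eq [IsFiniteMeasure μ] [IsFiniteMeasure ν] (hX : IsCompact X)
    (hμ : ∀ᵐ x ∂μ, x ∈ X) (hν : ∀ᵐ x ∂ν, x ∈ X)
    (moments_eq : ∀ d : ι → ℕ, ∫ x, ∏ i, x i ^ d i ∂μ = ∫ x, ∏ i, x i ^ d i ∂ν) : μ = ν := by
  refine ext_of_forall_integral_eq_of_IsFiniteMeasure fun u => ?_
  simpa using integral_continuous_mul_eq_of_moments_eq hX hμ hν (integrable_const (1 : ℝ))
    (integrable_const 1) (by simpa using moments_eq) u.continuous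

theorem ae_eq_of_moments_eq (hX : IsCompact X) (hμ : ∀ᵐ x ∂μ, x ∈ X) {g h : (ι → ℝ) → ℝ}
    (hg : Integrable g μ) (hh : Integrable h μ)
    (moments_eq : ∀ d : ι → ℕ,
      ∫ x, (∏ i, x i ^ d i) * g x ∂μ = ∫ x, (∏ i, x i ^ d i) * h x ∂μ) : g =ᵐ[μ] h :=
  ae_eq_of_integral_contDiff_smul_eq hg.locallyIntegrable hh.locallyIntegrable fun _ hu _ =>
    integral_continuous_mul_eq_of_moments_eq hX hμ hμ hg hh moments_eq hu.continuous

end Determinacy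

section ConditionalExpectation

variable {Ω : Type*} {m mΩ : MeasurableSpace Ω} {P : Measure Ω}

theorem comp_ae_eq_condExp_of_moments_eq [IsFiniteMeasure P] {ι : Type*} [Fintype ι]
    {X : Set (ι → ℝ)} (hX : IsCompact X) {T : Ω → ι → ℝ} (hT : Measurable T)
    (hTX : ∀ᵐ ω ∂P, T ω ∈ X) {Y : Ω → ℝ} (hY : Integrable Y P) {f : (ι → ℝ) → ℝ}
    (hf : Integrable f (P.map T))
    (moments_eq : ∀ d : ι → ℕ,
      ∫ ω, (∏ i, T ω i ^ d i) * Y ω ∂P = ∫ x, (∏ i, x i ^ d i) * f x ∂(P.map T)) :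
    f ∘ T =ᵐ[P] P[Y | MeasurableSpace.comap T inferInstance] := by
  obtain ⟨h, h_meas, condExp_eq⟩ := (stronglyMeasurable_condExp (μ := P) (f := Y)
    (m := MeasurableSpace.comap T inferInstance)).exists_eq_measurable_comp
  have h_int : Integrable h (P.map T) := by
    rw [integrable_map_measure h_meas.aestronglyMeasurable hT.aemeasurable, ← condExp_eq]
    exact integrable_condExp
  have h_moments (d : ι → ℕ) :
      ∫ x, (∏ i, x i ^ d i) * h x ∂(P.map T) = ∫ ω, (∏ i, T ω i ^ d i) * Y ω ∂P := by
    have monomial_cont : Continuous fun x : ι → ℝ => ∏ i, x i ^ d i := by fun_prop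
    have pull_out := condExp_mul_of_stronglyMeasurable_left (f := fun ω => ∏ i, T ω i ^ d i)
      (monomial_cont.stronglyMeasurable.comp_measurable (comap_measurable T))
      (integrable_continuous_comp_mul hX hT hTX monomial_cont hY) hY
    calc ∫ x, (∏ i, x i ^ d i) * h x ∂(P.map T)
        = ∫ ω, (∏ i, T ω i ^ d i) * h (T ω) ∂P :=
          integral_map hT.aemeasurable
            (monomial_cont.stronglyMeasurable.mul h_meas).aestronglyMeasurable
      _ = ∫ ω, P[fun ω => (∏ i, T ω i ^ d i) * Y ω | MeasurableSpace.comap T inferInstance] ω ∂P :=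
          integral_congr_ae (by rw [condExp_eq] at pull_out; exact pull_out.symm)
      _ = ∫ ω, (∏ i, T ω i ^ d i) * Y ω ∂P := integral_condExp hT.comap_le
  have f_eq_h : f =ᵐ[P.map T] h :=
    ae_eq_of_moments_eq hX ((ae_map_iff hT.aemeasurable hX.measurableSet).2 hTX) hf h_int
      fun d => (moments_eq d).symm.trans (h_moments d).symm
  rw [condExp_eq]
  exact ae_eq_comp hT.aemeasurable f_eq_h

variable {E : Type*} [NormedAddCommGroup E] [NormedSpace ℝ E] [CompleteSpace E]
  {s : Set E} {ψ : E → ℝ} {Y : Ω → E} {w : Ω → ℝ}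

theorem mul_comp_condExp_ae_le_condExp (hm : m ≤ mΩ) [SigmaFinite (P.trim hm)] (hs : IsClosed s)
    (hψ : ConvexOn ℝ s ψ) (hψ_lsc : LowerSemicontinuousOn ψ s) (hYs : ∀ᵐ ω ∂P, Y ω ∈ s)
    (hY : Integrable Y P) (hψY : Integrable (ψ ∘ Y) P) (hw : StronglyMeasurable[m] w)
    (hw0 : 0 ≤ᵐ[P] w) (hwψY : Integrable (w * ψ ∘ Y) P) :
    w * ψ ∘ P[Y | m] ≤ᵐ[P] P[w * ψ ∘ Y | m] := by
  filter_upwards [hψ.map_condExp_le hm hψ_lsc hYs hs hY hψY, hw0,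
    condExp_mul_of_stronglyMeasurable_left hw hwψY hψY] with ω jensen hwω pull_out
  rw [pull_out]
  exact mul_le_mul_of_nonneg_left jensen hwω

theorem integrable_mul_comp_condExp (hm : m ≤ mΩ) [SigmaFinite (P.trim hm)] (hs : IsClosed s)
    (hψ : ConvexOn ℝ s ψ) (hψ_lsc : LowerSemicontinuousOn ψ s) (hψ0 : ∀ y ∈ s, 0 ≤ ψ y)
    (hψ_meas : AEStronglyMeasurable (ψ ∘ P[Y | m]) P) (hYs : ∀ᵐ ω ∂P, Y ω ∈ s)
    (hY : Integrable Y P) (hψY : Integrable (ψ ∘ Y) P) (hw : StronglyMeasurable[m] w)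
    (hw0 : 0 ≤ᵐ[P] w) (hwψY : Integrable (w * ψ ∘ Y) P) :
    Integrable (w * ψ ∘ P[Y | m]) P := by
  refine (integrable_condExp (m := m) (f := w * ψ ∘ Y)).mono'
    ((hw.mono hm).aestronglyMeasurable.mul hψ_meas) ?_
  filter_upwards [mul_comp_condExp_ae_le_condExp hm hs hψ hψ_lsc hYs hY hψY hw hw0 hwψY, hw0,
    hψ.1.condExp_mem hm hY hs hYs] with ω jensen hwω hYω
  exact (Real.norm_of_nonneg (mul_nonneg hwω (hψ0 _ hYω))).trans_le jensen

theorem integral_mul_comp_condExp_le (hm : m ≤ mΩ) [SigmaFinite (P.trim hm)] (hs : IsClosed s)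
    (hψ : ConvexOn ℝ s ψ) (hψ_lsc : LowerSemicontinuousOn ψ s) (hYs : ∀ᵐ ω ∂P, Y ω ∈ s)
    (hY : Integrable Y P) (hψY : Integrable (ψ ∘ Y) P) (hw : StronglyMeasurable[m] w)
    (hw0 : 0 ≤ᵐ[P] w) (hwψY : Integrable (w * ψ ∘ Y) P)
    (hwψE : Integrable (w * ψ ∘ P[Y | m]) P) :
    ∫ ω, w ω * ψ (P[Y | m] ω) ∂P ≤ ∫ ω, w ω * ψ (Y ω) ∂P :=
  calc ∫ ω, w ω * ψ (P[Y | m] ω) ∂P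
      ≤ ∫ ω, P[w * ψ ∘ Y | m] ω ∂P :=
        integral_mono_ae hwψE integrable_condExp
          (mul_comp_condExp_ae_le_condExp hm hs hψ hψ_lsc hYs hY hψY hw hw0 hwψY)
    _ = ∫ ω, w ω * ψ (Y ω) ∂P := integral_condExp hm

theorem integrable_mul_pow_and_integral_le_of_ae_eq_condExp (hm : m ≤ mΩ)
    [SigmaFinite (P.trim hm)] {Y Z : Ω → ℝ} (hZ : Z =ᵐ[P] P[Y | m]) (hY0 : 0 ≤ᵐ[P] Y)
    (hY : Integrable Y P) {k : ℕ} (hYk : Integrable (fun ω => Y ω ^ k) P)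
    (hw : StronglyMeasurable[m] w) (hw0 : 0 ≤ᵐ[P] w)
    (hwYk : Integrable (fun ω => w ω * Y ω ^ k) P) :
    Integrable (fun ω => w ω * Z ω ^ k) P ∧
      ∫ ω, w ω * Z ω ^ k ∂P ≤ ∫ ω, w ω * Y ω ^ k ∂P := by
  have pow_lsc : LowerSemicontinuousOn (fun y : ℝ => y ^ k) (Ici 0) :=
    (continuous_pow k).lowerSemicontinuous.lowerSemicontinuousOn _
  have Z_pow_ae_eq : (fun ω => w ω * Z ω ^ k) =ᵐ[P] fun ω => w ω * P[Y | m] ω ^ k :=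
    hZ.mono fun ω hω => by simp only [hω]
  have condExp_int : Integrable (fun ω => w ω * P[Y | m] ω ^ k) P :=
    integrable_mul_comp_condExp (ψ := fun y => y ^ k) hm isClosed_Ici (convexOn_pow k) pow_lsc
      (fun _ hy => pow_nonneg hy k) (integrable_condExp.aestronglyMeasurable.pow k) hY0 hY hYk
      hw hw0 hwYk
  refine ⟨condExp_int.congr Z_pow_ae_eq.symm, (integral_congr_ae Z_pow_ae_eq).trans_le ?_⟩
  exact integral_mul_comp_condExp_le hm isClosed_Ici (convexOn_pow k) pow_lsc hY0 hY hYk hw hw0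
    hwYk condExp_int

end ConditionalExpectation

theorem moment_domination_general {ι : Type*} [Fintype ι] {X : Set (ι → ℝ)} (hX : IsCompact X)
    (hX0 : X ⊆ Ici 0) {lam : Measure (ι → ℝ)} [IsFiniteMeasure lam] (hlam : ∀ᵐ x ∂lam, x ∈ X)
    {f : (ι → ℝ) → ℝ} (hf : Integrable f lam) {φ : Measure ((ι → ℝ) × ℝ)} [IsFiniteMeasure φ]
    (hφ : ∀ᵐ p ∂φ, p ∈ X ×ˢ Ici (0 : ℝ))
    (hφint : ∀ k : ℕ, Integrable (fun p : (ι → ℝ) × ℝ => p.2 ^ k) φ)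
    (hmom0 : ∀ dx : ι → ℕ,
      ∫ p : (ι → ℝ) × ℝ, (∏ i, p.1 i ^ dx i) ∂φ = ∫ x, ∏ i, x i ^ dx i ∂lam)
    (hmom1 : ∀ dx : ι → ℕ,
      ∫ p : (ι → ℝ) × ℝ, (∏ i, p.1 i ^ dx i) * p.2 ∂φ = ∫ x, (∏ i, x i ^ dx i) * f x ∂lam)
    (d : (ι → ℕ) × ℕ) :
    Integrable (fun x => (∏ i, x i ^ d.1 i) * f x ^ d.2) lam ∧
      ∫ x, (∏ i, x i ^ d.1 i) * f x ^ d.2 ∂lam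
        ≤ ∫ p : (ι → ℝ) × ℝ, (∏ i, p.1 i ^ d.1 i) * p.2 ^ d.2 ∂φ := by
  have hφX : ∀ᵐ p ∂φ, p.1 ∈ X := hφ.mono fun p hp => hp.1
  have monomial_cont : Continuous fun x : ι → ℝ => ∏ i, x i ^ d.1 i := by fun_prop
  have hφ_fst : ∀ᵐ x ∂(φ.map Prod.fst), x ∈ X :=
    (ae_map_iff measurable_fst.aemeasurable hX.measurableSet).2 hφX
  have marginal_eq : lam = φ.map Prod.fst := by
    refine measure_eq_of_moments_eq hX hlam hφ_fst fun dx => ?_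
    have dx_cont : Continuous fun x : ι → ℝ => ∏ i, x i ^ dx i := by fun_prop
    rw [integral_map measurable_fst.aemeasurable dx_cont.aestronglyMeasurable, hmom0]
  subst marginal_eq
  have snd_int : Integrable Prod.snd φ := by simpa using hφint 1
  have condExp_eq := comp_ae_eq_condExp_of_moments_eq hX measurable_fst hφX snd_int hf hmom1
  have fiber_meas : AEStronglyMeasurable (fun x => (∏ i, x i ^ d.1 i) * f x ^ d.2)
      (φ.map Prod.fst) :=
    monomial_cont.aestronglyMeasurable.mul (hf.aestronglyMeasurable.pow d.2)
  rw [integrable_map_measure fiber_meas measurable_fst.aemeasurable,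
    integral_map measurable_fst.aemeasurable fiber_meas]
  exact integrable_mul_pow_and_integral_le_of_ae_eq_condExp measurable_fst.comap_le condExp_eq
    (hφ.mono fun p hp => hp.2) snd_int (hφint d.2)
    (monomial_cont.stronglyMeasurable.comp_measurable (comap_measurable Prod.fst))
    (hφX.mono fun p hp => Finset.prod_nonneg fun i _ => pow_nonneg (hX0 hp i) _)
    (integrable_continuous_comp_mul hX measurable_fst hφX monomial_cont (hφint d.2))

/-- If a finite nonnegative Borel measure `φ` on `X × Y` has all moments
finite and its moments of order `(d_x, 0)` and `(d_x, 1)` agree with those of the measure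
`μ = δ_{f(x)}(dy) λ(dx)` supported on the graph of `f`, then every moment of `φ`
dominates the corresponding moment of `μ`. -/
theorem moment_domination
    (n : ℕ) (hn : 1 ≤ n)
    (X : Set (Fin n → ℝ)) (hXsub : X ⊆ Icc 0 1) (hXc : IsCompact X)
    (γ : ℝ) (hγ : 0 < γ)
    (lam : Measure (Fin n → ℝ)) [IsProbabilityMeasure lam] (hlam : lam Xᶜ = 0)
    (f : (Fin n → ℝ) → ℝ) (hf : Measurable f) (hfY : ∀ x ∈ X, f x ∈ Icc 0 γ)
    (φ : Measure ((Fin n → ℝ) × ℝ)) [IsFiniteMeasure φ]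
    (hφsupp : φ ((X ×ˢ Icc (0:ℝ) γ)ᶜ) = 0)
    (hφint : ∀ d : (Fin n → ℕ) × ℕ,
      Integrable (fun p : (Fin n → ℝ) × ℝ => (∏ i, p.1 i ^ d.1 i) * p.2 ^ d.2) φ)
    (hmom0 : ∀ dx : Fin n → ℕ,
      ∫ p : (Fin n → ℝ) × ℝ, (∏ i, p.1 i ^ dx i) ∂φ = ∫ x, ∏ i, x i ^ dx i ∂lam)
    (hmom1 : ∀ dx : Fin n → ℕ,
      ∫ p : (Fin n → ℝ) × ℝ, (∏ i, p.1 i ^ dx i) * p.2 ∂φ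
        = ∫ x, (∏ i, x i ^ dx i) * f x ∂lam) :
    ∀ d : (Fin n → ℕ) × ℕ,
      ∫ x, (∏ i, x i ^ d.1 i) * f x ^ d.2 ∂lam
        ≤ ∫ p : (Fin n → ℝ) × ℝ, (∏ i, p.1 i ^ d.1 i) * p.2 ^ d.2 ∂φ := by
  have hf_int : Integrable f lam := .of_bound hf.aestronglyMeasurable γ <|
    Filter.Eventually.mono hlam fun x hx =>
      (Real.norm_of_nonneg (hfY x hx).1).trans_le (hfY x hx).2
  exact fun d => (moment_domination_general hXc (fun x hx => (hXsub hx).1) hlam hf_int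
    (Filter.Eventually.mono hφsupp fun p hp => ⟨hp.1, hp.2.1⟩)
    (fun k => by simpa using hφint (0, k)) hmom0 hmom1 d).2
end
end

section
/- Let φ be a finite nonnegative Borel measure on X×Y all of whose moments φ_d := ∫_{X×Y} x^{d_x} y^{d_y} dφ(x,y) are finite, and suppose φ_{(d_x,0)} = λ_{d_x} and φ_{(d_x,1)} = μ_{(d_x,1)} for all d_x ∈ ℕ^n. Then for every r ∈ ℕ, Σ_{d ∈ ℕ^n×ℕ, |d| ≤ r} μ_{2d} ≤ Σ_{d ∈ ℕ^n×ℕ, |d| ≤ r} φ_{2d}; that is, the trace of the moment matrix of order r of μ is bounded above by that of φ. -/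
open MeasureTheory Set

noncomputable section

/-- The finite set of multi-indices `d ∈ ℕ^n × ℕ` with `|d| ≤ r`. -/
def idx (n r : ℕ) : Finset ((Fin n → ℕ) × ℕ) :=
  Finset.filter (fun d => (∑ i, d.1 i) + d.2 ≤ r)
    ((Fintype.piFinset fun _ : Fin n => Finset.range (r + 1)) ×ˢ Finset.range (r + 1))

/-! On a compact set polynomials are uniformly dense in the continuous functions, so moments
determine finite measures and integrable densities. The moments of order `0` in `y` therefore
identify the first marginal of `φ` with `λ`, and those of order `1` identify `f x` with the mean of
`y` under the conditional law of `φ` given `x`. Jensen's inequality for that law bounds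
`f x ^ (2 * k)` by the conditional mean of `y ^ (2 * k)`, and integrating against the nonnegative
weight `∏ i, x i ^ (2 * d i)` compares the traces term by term. -/

section PolynomialApproximation

variable {ι : Type*} {K : Set (ι → ℝ)}

/-- The restriction of real polynomials to `K`, as an algebra homomorphism into the continuous
functions on `K`; its range is the algebra to which the Stone-Weierstrass theorem is applied. -/
def polynomialRestriction (K : Set (ι → ℝ)) : MvPolynomial ι ℝ →ₐ[ℝ] C(K, ℝ) :=
  MvPolynomial.aeval fun i ↦ ⟨fun x ↦ x.1 i, (continuous_apply i).comp continuous_subtype_val⟩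

lemma polynomialRestriction_apply (p : MvPolynomial ι ℝ) (x : K) :
    polynomialRestriction K p x = MvPolynomial.eval x.1 p := by
  induction p using MvPolynomial.induction_on with
  | C a => simp [polynomialRestriction]
  | add p q hp hq => simp [hp, hq]
  | mul_X p i hp =>
    rw [map_mul, map_mul, ContinuousMap.mul_apply, hp]
    simp [polynomialRestriction]

lemma separatesPoints_range_polynomialRestriction (K : Set (ι → ℝ)) :
    (polynomialRestriction K).range.SeparatesPoints := by
  intro x y hxy
  obtain ⟨i, hi⟩ := Function.ne_iff.mp (Subtype.coe_ne_coe.mpr hxy)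
  refine ⟨_, ⟨polynomialRestriction K (.X i), ⟨.X i, rfl⟩, rfl⟩, ?_⟩
  simpa [polynomialRestriction_apply] using hi

lemma exists_mvPolynomial_near_of_continuousOn (hK : IsCompact K) {g : (ι → ℝ) → ℝ}
    (hg : ContinuousOn g K) {ε : ℝ} (hε : 0 < ε) :
    ∃ p : MvPolynomial ι ℝ, ∀ x ∈ K, |MvPolynomial.eval x p - g x| < ε := by
  have : CompactSpace K := isCompact_iff_compactSpace.mp hK
  obtain ⟨⟨_, p, rfl⟩, hp⟩ :=
    ContinuousMap.exists_mem_subalgebra_near_continuous_of_separatesPoints _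
      (separatesPoints_range_polynomialRestriction K) (K.domRestrict g) hg.domRestrict ε hε
  exact ⟨p, fun x hx ↦ by simpa [polynomialRestriction_apply] using hp ⟨x, hx⟩⟩

end PolynomialApproximation

section ContinuousWeights

variable {α β F : Type*} [TopologicalSpace α] [MeasurableSpace α] [OpensMeasurableSpace α]
  [MeasurableSpace β] [NormedAddCommGroup F] [NormedSpace ℝ F] {K : Set α}

lemma integrable_continuous_comp_smul_of_ae_mem_isCompact {ρ : Measure β} {T : β → α} {u : β → F}
    (hK : IsCompact K) (hT : Measurable T) (hρ : ∀ᵐ b ∂ρ, T b ∈ K) (hu : Integrable u ρ)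
    {g : α → ℝ} (hg : Continuous g) : Integrable (fun b ↦ g (T b) • u b) ρ := by
  obtain ⟨C, hC⟩ := hK.exists_bound_of_continuousOn hg.continuousOn
  exact hu.bdd_smul C (hg.measurable.comp hT).aestronglyMeasurable (hρ.mono fun b hb ↦ hC _ hb)

variable {μ : Measure α} {u : α → F} {g q : α → ℝ}

lemma integrable_continuous_smul_of_ae_mem_isCompact (hK : IsCompact K) (hμ : ∀ᵐ x ∂μ, x ∈ K)
    (hu : Integrable u μ) (hg : Continuous g) : Integrable (fun x ↦ g x • u x) μ :=
  integrable_continuous_comp_smul_of_ae_mem_isCompact hK measurable_id hμ hu hg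

lemma norm_integral_smul_sub_integral_smul_le (hK : IsCompact K) (hμ : ∀ᵐ x ∂μ, x ∈ K)
    (hu : Integrable u μ) (hq : Continuous q) (hg : Continuous g) {ε : ℝ}
    (hqg : ∀ x ∈ K, |q x - g x| ≤ ε) :
    ‖∫ x, q x • u x ∂μ - ∫ x, g x • u x ∂μ‖ ≤ ε * ∫ x, ‖u x‖ ∂μ := by
  rw [← integral_sub (integrable_continuous_smul_of_ae_mem_isCompact hK hμ hu hq)
    (integrable_continuous_smul_of_ae_mem_isCompact hK hμ hu hg), ← integral_const_mul]
  refine norm_integral_le_of_norm_le (hu.norm.const_mul ε) (hμ.mono fun x hx ↦ ?_)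
  rw [← sub_smul, norm_smul]
  exact mul_le_mul_of_nonneg_right (hqg x hx) (norm_nonneg _)

end ContinuousWeights

section MomentDeterminacy

variable {ι F : Type*} [Fintype ι] [NormedAddCommGroup F] [NormedSpace ℝ F]
  {K : Set (ι → ℝ)} {μ ν : Measure (ι → ℝ)} {u v : (ι → ℝ) → F}

lemma integral_eval_smul_eq_sum (hK : IsCompact K) (hμ : ∀ᵐ x ∂μ, x ∈ K) (hu : Integrable u μ)
    (p : MvPolynomial ι ℝ) :
    ∫ x, MvPolynomial.eval x p • u x ∂μ
      = ∑ d ∈ p.support, p.coeff d • ∫ x, (∏ i, x i ^ d i) • u x ∂μ := by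
  simp only [MvPolynomial.eval_eq', Finset.sum_smul, mul_smul]
  rw [integral_finsetSum]
  · simp only [integral_smul]
  · intro d _
    have monomial_continuous : Continuous fun x : ι → ℝ ↦ ∏ i, x i ^ d i := by fun_prop
    exact (integrable_continuous_smul_of_ae_mem_isCompact hK hμ hu monomial_continuous).smul
      (p.coeff d)

lemma integral_continuous_smul_eq_of_forall_integral_monomial_smul_eq (hK : IsCompact K)
    (hμ : ∀ᵐ x ∂μ, x ∈ K) (hν : ∀ᵐ x ∂ν, x ∈ K) (hu : Integrable u μ) (hv : Integrable v ν)
    (h : ∀ d : ι → ℕ, ∫ x, (∏ i, x i ^ d i) • u x ∂μ = ∫ x, (∏ i, x i ^ d i) • v x ∂ν)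
    {g : (ι → ℝ) → ℝ} (hg : Continuous g) :
    ∫ x, g x • u x ∂μ = ∫ x, g x • v x ∂ν := by
  set C := ∫ x, ‖u x‖ ∂μ + ∫ x, ‖v x‖ ∂ν
  have hC : 0 ≤ C := by positivity
  refine eq_of_forall_dist_le fun ε hε ↦ ?_
  obtain ⟨p, hp⟩ := exists_mvPolynomial_near_of_continuousOn hK hg.continuousOn
    (show 0 < ε / (C + 1) by positivity)
  have near_u := norm_integral_smul_sub_integral_smul_le hK hμ hu p.continuous_eval hg
    fun x hx ↦ (hp x hx).le
  have near_v := norm_integral_smul_sub_integral_smul_le hK hν hv p.continuous_eval hg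
    fun x hx ↦ (hp x hx).le
  have eval_eq : ∫ x, MvPolynomial.eval x p • u x ∂μ = ∫ x, MvPolynomial.eval x p • v x ∂ν := by
    simp only [integral_eval_smul_eq_sum hK hμ hu, integral_eval_smul_eq_sum hK hν hv, h]
  rw [eval_eq] at near_u
  calc dist (∫ x, g x • u x ∂μ) (∫ x, g x • v x ∂ν)
      ≤ ε / (C + 1) * ∫ x, ‖u x‖ ∂μ + ε / (C + 1) * ∫ x, ‖v x‖ ∂ν :=
        (dist_triangle_left _ _ _).trans
          (add_le_add ((dist_eq_norm _ _).trans_le near_u) ((dist_eq_norm _ _).trans_le near_v))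
    _ = ε * (C / (C + 1)) := by ring
    _ ≤ ε := mul_le_of_le_one_right hε.le (div_le_one_of_le₀ (by linarith) (by linarith))

lemma measure_eq_of_forall_integral_monomial_eq [IsFiniteMeasure μ] [IsFiniteMeasure ν]
    (hK : IsCompact K) (hμ : ∀ᵐ x ∂μ, x ∈ K) (hν : ∀ᵐ x ∂ν, x ∈ K)
    (h : ∀ d : ι → ℕ, ∫ x, ∏ i, x i ^ d i ∂μ = ∫ x, ∏ i, x i ^ d i ∂ν) : μ = ν := by
  refine ext_of_forall_integral_eq_of_IsFiniteMeasure fun g ↦ ?_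
  simpa using integral_continuous_smul_eq_of_forall_integral_monomial_smul_eq hK hμ hν
    (integrable_const (1 : ℝ)) (integrable_const (1 : ℝ)) (by simpa using h) g.continuous

lemma fst_eq_of_forall_integral_monomial_eq {Ω : Type*} [MeasurableSpace Ω]
    {φ : Measure ((ι → ℝ) × Ω)} [IsFiniteMeasure φ] [IsFiniteMeasure ν] (hK : IsCompact K)
    (hφ : ∀ᵐ p ∂φ, p.1 ∈ K) (hν : ∀ᵐ x ∂ν, x ∈ K)
    (h : ∀ d : ι → ℕ, ∫ p, ∏ i, p.1 i ^ d i ∂φ = ∫ x, ∏ i, x i ^ d i ∂ν) : φ.fst = ν := by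
  refine measure_eq_of_forall_integral_monomial_eq hK
    ((ae_map_iff measurable_fst.aemeasurable hK.measurableSet).mpr hφ) hν fun d ↦ ?_
  rw [← h, Measure.fst, integral_map measurable_fst.aemeasurable
    (Continuous.aestronglyMeasurable (by fun_prop))]

lemma ae_eq_of_forall_integral_monomial_smul_eq [CompleteSpace F] (hK : IsCompact K)
    (hμ : ∀ᵐ x ∂μ, x ∈ K) (hu : Integrable u μ) (hv : Integrable v μ)
    (h : ∀ d : ι → ℕ, ∫ x, (∏ i, x i ^ d i) • u x ∂μ = ∫ x, (∏ i, x i ^ d i) • v x ∂μ) :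
    u =ᵐ[μ] v :=
  ae_eq_of_integral_contDiff_smul_eq hu.locallyIntegrable hv.locallyIntegrable fun _ hg _ ↦
    integral_continuous_smul_eq_of_forall_integral_monomial_smul_eq hK hμ hμ hu hv h hg.continuous

end MomentDeterminacy

section ConditionalMean

variable {α E : Type*} [MeasurableSpace α] [NormedAddCommGroup E] [NormedSpace ℝ E]
  [MeasurableSpace E] [StandardBorelSpace E] {φ : Measure (α × E)} [IsFiniteMeasure φ]

/-- The conditional mean of the second coordinate given the first one under `φ`, computed from the
disintegration of `φ` along its first marginal. It is determined up to a `φ.fst`-null set. -/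
def condMean (φ : Measure (α × E)) [IsFiniteMeasure φ] (x : α) : E :=
  ∫ y, y ∂φ.condKernel x

lemma integrable_condMean (hφ : Integrable Prod.snd φ) : Integrable (condMean φ) φ.fst :=
  hφ.integral_condKernel

lemma integral_smul_condMean {g : α → ℝ} (hg : Integrable (fun p ↦ g p.1 • p.2) φ) :
    ∫ x, g x • condMean φ x ∂φ.fst = ∫ p, g p.1 • p.2 ∂φ := by
  simp only [condMean, ← integral_smul]
  exact Measure.integral_condKernel hg

lemma integral_mul_comp_condMean_le [CompleteSpace E] {ψ : E → ℝ} (hψ : ConvexOn ℝ univ ψ)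
    (hψc : Continuous ψ) (hψ0 : 0 ≤ ψ) {w : α → ℝ} (hw : 0 ≤ w) (hφ : Integrable Prod.snd φ)
    (hwψ : Integrable (fun p ↦ w p.1 * ψ p.2) φ) :
    ∫ x, w x * ψ (condMean φ x) ∂φ.fst ≤ ∫ p, w p.1 * ψ p.2 ∂φ := by
  rw [← Measure.integral_condKernel hwψ]
  refine integral_mono_of_nonneg (.of_forall fun x ↦ mul_nonneg (hw x) (hψ0 _))
    hwψ.integral_condKernel ?_
  filter_upwards [hφ.condKernel_ae, hwψ.condKernel_ae] with x hx hwx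
  exact (hψ.smul (hw x)).map_integral_le (hψc.const_smul (w x)).continuousOn isClosed_univ
    (.of_forall fun _ ↦ mem_univ _) hx hwx

end ConditionalMean

section MomentMatching

variable {ι E : Type*} [Fintype ι] [NormedAddCommGroup E] [NormedSpace ℝ E] [CompleteSpace E]
  [MeasurableSpace E] [StandardBorelSpace E] {K : Set (ι → ℝ)}
  {φ : Measure ((ι → ℝ) × E)} [IsFiniteMeasure φ] {f : (ι → ℝ) → E}

lemma condMean_ae_eq_of_forall_integral_monomial_smul_eq (hK : IsCompact K)
    (hφ : ∀ᵐ p ∂φ, p.1 ∈ K) (hf : Integrable f φ.fst) (hsnd : Integrable Prod.snd φ)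
    (h : ∀ d : ι → ℕ,
      ∫ p, (∏ i, p.1 i ^ d i) • p.2 ∂φ = ∫ x, (∏ i, x i ^ d i) • f x ∂φ.fst) :
    condMean φ =ᵐ[φ.fst] f := by
  refine ae_eq_of_forall_integral_monomial_smul_eq hK
    ((ae_map_iff measurable_fst.aemeasurable hK.measurableSet).mpr hφ)
    (integrable_condMean hsnd) hf fun d ↦ ?_
  have monomial_continuous : Continuous fun x : ι → ℝ ↦ ∏ i, x i ^ d i := by fun_prop
  have monomial_smul_integrable : Integrable (fun p ↦ (∏ i, p.1 i ^ d i) • p.2) φ :=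
    integrable_continuous_comp_smul_of_ae_mem_isCompact hK measurable_fst hφ hsnd
      monomial_continuous
  exact (integral_smul_condMean monomial_smul_integrable).trans (h d)

lemma integral_mul_comp_le_of_forall_integral_monomial_eq
    {lam : Measure (ι → ℝ)} [IsFiniteMeasure lam] (hK : IsCompact K) (hlam : ∀ᵐ x ∂lam, x ∈ K)
    (hφ : ∀ᵐ p ∂φ, p.1 ∈ K) (hf : Integrable f lam) (hsnd : Integrable Prod.snd φ)
    (hmom0 : ∀ d : ι → ℕ, ∫ p, ∏ i, p.1 i ^ d i ∂φ = ∫ x, ∏ i, x i ^ d i ∂lam)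
    (hmom1 : ∀ d : ι → ℕ,
      ∫ p, (∏ i, p.1 i ^ d i) • p.2 ∂φ = ∫ x, (∏ i, x i ^ d i) • f x ∂lam)
    {ψ : E → ℝ} (hψ : ConvexOn ℝ univ ψ) (hψc : Continuous ψ) (hψ0 : 0 ≤ ψ)
    {w : (ι → ℝ) → ℝ} (hw : 0 ≤ w) (hwψ : Integrable (fun p ↦ w p.1 * ψ p.2) φ) :
    ∫ x, w x * ψ (f x) ∂lam ≤ ∫ p, w p.1 * ψ p.2 ∂φ := by
  obtain rfl : φ.fst = lam := fst_eq_of_forall_integral_monomial_eq hK hφ hlam hmom0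
  have mean_eq := condMean_ae_eq_of_forall_integral_monomial_smul_eq hK hφ hf hsnd hmom1
  calc ∫ x, w x * ψ (f x) ∂φ.fst
      = ∫ x, w x * ψ (condMean φ x) ∂φ.fst :=
        integral_congr_ae (mean_eq.mono fun x hx ↦ by simp only [hx])
    _ ≤ ∫ p, w p.1 * ψ p.2 ∂φ := integral_mul_comp_condMean_le hψ hψc hψ0 hw hsnd hwψ

end MomentMatching

theorem trace_moment_matrix_domination_general
    {ι : Type*} [Fintype ι] {X : Set (ι → ℝ)} (hX : IsCompact X)
    {lam : Measure (ι → ℝ)} [IsFiniteMeasure lam] (hlam : ∀ᵐ x ∂lam, x ∈ X)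
    {f : (ι → ℝ) → ℝ} (hf : Integrable f lam)
    {φ : Measure ((ι → ℝ) × ℝ)} [IsFiniteMeasure φ] (hφ : ∀ᵐ p ∂φ, p.1 ∈ X)
    (hφint : ∀ d : (ι → ℕ) × ℕ, Integrable (fun p ↦ (∏ i, p.1 i ^ d.1 i) * p.2 ^ d.2) φ)
    (hmom0 : ∀ dx : ι → ℕ, ∫ p, ∏ i, p.1 i ^ dx i ∂φ = ∫ x, ∏ i, x i ^ dx i ∂lam)
    (hmom1 : ∀ dx : ι → ℕ,
      ∫ p, (∏ i, p.1 i ^ dx i) * p.2 ∂φ = ∫ x, (∏ i, x i ^ dx i) * f x ∂lam)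
    (D : Finset ((ι → ℕ) × ℕ)) :
    ∑ d ∈ D, ∫ x, (∏ i, x i ^ (2 * d.1 i)) * f x ^ (2 * d.2) ∂lam
      ≤ ∑ d ∈ D, ∫ p, (∏ i, p.1 i ^ (2 * d.1 i)) * p.2 ^ (2 * d.2) ∂φ := by
  have hsnd : Integrable Prod.snd φ := by simpa using hφint (0, 1)
  refine Finset.sum_le_sum fun d _ ↦ ?_
  exact integral_mul_comp_le_of_forall_integral_monomial_eq hX hlam hφ hf hsnd hmom0 hmom1
    (ψ := fun y ↦ y ^ (2 * d.2)) (w := fun x ↦ ∏ i, x i ^ (2 * d.1 i))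
    (even_two_mul d.2).convexOn_pow (by fun_prop) (fun y ↦ (even_two_mul d.2).pow_nonneg y)
    (fun x ↦ Finset.prod_nonneg fun i _ ↦ (even_two_mul (d.1 i)).pow_nonneg (x i))
    (hφint (fun i ↦ 2 * d.1 i, 2 * d.2))

/-- Under the moment matching hypotheses of orders `0` and `1` in `y`,
the trace of the moment matrix of order `r` of `μ = δ_{f(x)}(dy) λ(dx)`, i.e.
`Σ_{|d| ≤ r} μ_{2d}`, is bounded above by the corresponding trace for `φ`. -/
theorem trace_moment_matrix_domination
    (n : ℕ) (hn : 1 ≤ n)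
    (X : Set (Fin n → ℝ)) (hXsub : X ⊆ Icc 0 1) (hXc : IsCompact X)
    (γ : ℝ) (hγ : 0 < γ)
    (lam : Measure (Fin n → ℝ)) [IsProbabilityMeasure lam] (hlam : lam Xᶜ = 0)
    (f : (Fin n → ℝ) → ℝ) (hf : Measurable f) (hfY : ∀ x ∈ X, f x ∈ Icc 0 γ)
    (φ : Measure ((Fin n → ℝ) × ℝ)) [IsFiniteMeasure φ]
    (hφsupp : φ ((X ×ˢ Icc (0:ℝ) γ)ᶜ) = 0)
    (hφint : ∀ d : (Fin n → ℕ) × ℕ,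
      Integrable (fun p : (Fin n → ℝ) × ℝ => (∏ i, p.1 i ^ d.1 i) * p.2 ^ d.2) φ)
    (hmom0 : ∀ dx : Fin n → ℕ,
      ∫ p : (Fin n → ℝ) × ℝ, (∏ i, p.1 i ^ dx i) ∂φ = ∫ x, ∏ i, x i ^ dx i ∂lam)
    (hmom1 : ∀ dx : Fin n → ℕ,
      ∫ p : (Fin n → ℝ) × ℝ, (∏ i, p.1 i ^ dx i) * p.2 ∂φ
        = ∫ x, (∏ i, x i ^ dx i) * f x ∂lam) :
    ∀ r : ℕ,
      ∑ d ∈ idx n r, ∫ x, (∏ i, x i ^ (2 * d.1 i)) * f x ^ (2 * d.2) ∂lam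
        ≤ ∑ d ∈ idx n r,
            ∫ p : (Fin n → ℝ) × ℝ, (∏ i, p.1 i ^ (2 * d.1 i)) * p.2 ^ (2 * d.2) ∂φ :=
  fun r ↦ trace_moment_matrix_domination_general hXc hlam
    (.of_mem_Icc 0 γ hf.aemeasurable (.mono hlam hfY)) (.mono hφsupp fun _ hp ↦ hp.1)
    hφint hmom0 hmom1 (idx n r)
end
end

section
/- Let X ⊆ ℝ^n be a compact set (not necessarily contained in the nonnegative orthant), γ > 0, Y = [0,γ], λ a Borel probability measure on X, f : X → Y Borel measurable, and μ the measure dμ(x,y) = δ_{f(x)}(dy)λ(dx) on X×Y with moments μ_d = ∫_X x^{d_x} f(x)^{d_y} dλ(x). If φ is a finite nonnegative Borel measure on X×Y with finite moments φ_d = ∫ x^{d_x} y^{d_y} dφ satisfying φ_{(d_x,0)} = ∫_X x^{d_x} dλ and φ_{(d_x,1)} = μ_{(d_x,1)} for all d_x ∈ ℕ^n, then φ_{(2d_x, d_y)} ≥ μ_{(2d_x, d_y)} for all (d_x,d_y) ∈ ℕ^n × ℕ, i.e. the moment domination holds for all indices whose x-part is even. -/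
open MeasureTheory Set

noncomputable section

/-!
The moment conditions determine the first marginal of `φ` and the conditional mean of `y`. A finite
measure on a compact set is determined by its moments, because polynomials separate points, so the
first marginal of `φ` is `lam`. Applied to the pushforwards of the positive and negative parts of
`(y - f x) dφ`, the same fact yields `𝔼[y | x] = f x`. The domination is then Jensen's inequality
for `𝔼[· | x]` and the convex function `y ↦ y ^ k`, integrated against the weight `x ^ (2 d)`, whose
evenness is what makes it nonnegative.
-/

section MomentDeterminacy

variable {ι : Type*} {K : Set (ι → ℝ)}

section CompactSpace

variable [CompactSpace K]

variable (K) in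
/-- Restriction of polynomials to the compact set `K`. The values are bounded continuous functions
on the subtype, the setting of the measure extensionality theorem for subalgebras. -/
def polynomialOn : MvPolynomial ι ℝ →ₐ[ℝ] BoundedContinuousFunction K ℝ :=
  MvPolynomial.aeval fun i ↦
    BoundedContinuousFunction.mkOfCompact
      ⟨fun x ↦ x.1 i, (continuous_apply i).comp continuous_subtype_val⟩

theorem polynomialOn_apply (p : MvPolynomial ι ℝ) (x : K) :
    polynomialOn K p x = MvPolynomial.eval x.1 p := by
  induction p using MvPolynomial.induction_on with
  | C a => simp [polynomialOn, BoundedContinuousFunction.algebraMap_apply]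
  | add p q hp hq => simp only [map_add, BoundedContinuousFunction.add_apply, hp, hq]
  | mul_X p i hp =>
    simp only [map_mul, BoundedContinuousFunction.mul_apply, hp]
    simp [polynomialOn]

variable (K) in
/-- The polynomial functions on `K`, as a star subalgebra with the trivial involution of `ℝ`. -/
def polynomialStarSubalgebra : StarSubalgebra ℝ (BoundedContinuousFunction K ℝ) where
  __ := (polynomialOn K).range
  star_mem' {g} hg := by
    have star_eq : star g = g := by ext x; exact star_trivial (g x)
    exact star_eq.symm ▸ hg

variable (K) in
theorem separatesPoints_polynomialStarSubalgebra :
    ((polynomialStarSubalgebra K).map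
      (BoundedContinuousFunction.toContinuousMapStarₐ ℝ)).SeparatesPoints := by
  intro x y hxy
  obtain ⟨i, hi⟩ := Function.ne_iff.mp (Subtype.coe_ne_coe.mpr hxy)
  exact ⟨_, ⟨_, ⟨polynomialOn K (.X i), ⟨_, rfl⟩, rfl⟩, rfl⟩,
    by simpa [polynomialOn_apply] using hi⟩

end CompactSpace

variable [Fintype ι]

theorem memLp_top_monomial {Ω : Type*} [MeasurableSpace Ω] {P : Measure Ω} {X : Ω → ι → ℝ}
    (hK : IsCompact K) (hX : AEMeasurable X P) (hXK : ∀ᵐ ω ∂P, X ω ∈ K) (d : ι → ℕ) :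
    MemLp (fun ω ↦ ∏ i, X ω i ^ d i) ⊤ P := by
  have hcont : Continuous fun x : ι → ℝ ↦ ∏ i, x i ^ d i := by fun_prop
  obtain ⟨C, hC⟩ := hK.exists_bound_of_continuousOn hcont.continuousOn
  exact memLp_top_of_bound (hcont.comp_aestronglyMeasurable hX.aestronglyMeasurable) C
    (hXK.mono fun ω hω ↦ hC _ hω)

theorem integral_eval_mvPolynomial {ν : Measure (ι → ℝ)}
    (hν : ∀ d : ι → ℕ, Integrable (fun x ↦ ∏ i, x i ^ d i) ν) (p : MvPolynomial ι ℝ) :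
    ∫ x, MvPolynomial.eval x p ∂ν
      = ∑ d ∈ p.support, p.coeff d * ∫ x, ∏ i, x i ^ d i ∂ν := by
  simp_rw [MvPolynomial.eval_eq']
  rw [integral_finsetSum _ fun (d : ι →₀ ℕ) _ ↦ (hν d).const_mul _]
  simp_rw [integral_const_mul]

theorem measure_eq_of_integral_monomial_eq (hK : IsCompact K) {α β : Measure (ι → ℝ)}
    [IsFiniteMeasure α] [IsFiniteMeasure β] (hα : ∀ᵐ x ∂α, x ∈ K) (hβ : ∀ᵐ x ∂β, x ∈ K)
    (h : ∀ d : ι → ℕ, ∫ x, ∏ i, x i ^ d i ∂α = ∫ x, ∏ i, x i ^ d i ∂β) : α = β := by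
  have hKm := hK.measurableSet
  have : CompactSpace K := isCompact_iff_compactSpace.mp hK
  have integral_polynomialOn (ν : Measure (ι → ℝ)) [IsFiniteMeasure ν] (hν : ∀ᵐ x ∂ν, x ∈ K)
      (p : MvPolynomial ι ℝ) : ∫ x, polynomialOn K p x ∂(ν.comap (↑))
        = ∑ d ∈ p.support, p.coeff d * ∫ x, ∏ i, x i ^ d i ∂ν := by
    simp_rw [polynomialOn_apply]
    rw [integral_subtype_comap hKm (fun x ↦ MvPolynomial.eval x p),
      Measure.restrict_eq_self_of_ae_mem hν]
    exact integral_eval_mvPolynomial (fun d ↦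
      (memLp_top_monomial hK aemeasurable_id hν d).integrable le_top) p
  have comap_eq : α.comap ((↑) : K → ι → ℝ) = β.comap (↑) := by
    refine ext_of_forall_mem_subalgebra_integral_eq_of_pseudoEMetric_complete_countable
      (separatesPoints_polynomialStarSubalgebra K) ?_
    rintro _ ⟨p, rfl⟩
    refine (integral_polynomialOn α hα p).trans ?_
    simp_rw [h]
    exact (integral_polynomialOn β hβ p).symm
  rw [← Measure.restrict_eq_self_of_ae_mem hα, ← Measure.restrict_eq_self_of_ae_mem hβ,
    ← map_comap_subtype_coe hKm, ← map_comap_subtype_coe hKm, comap_eq]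

end MomentDeterminacy

section ConditionalMean

variable {Ω : Type*} [MeasurableSpace Ω] {P : Measure Ω}

section PosPart

variable {E : Type*} [MeasurableSpace E] {X : Ω → E} {u : Ω → ℝ}

variable (P X u) in
/-- The pushforward under `X` of the positive part of the signed measure `u dP`. Using it for `u`
and `-u` allows signed densities to be handled with positive measures only. -/
def mapPosPart : Measure E :=
  (P.withDensity fun ω ↦ ENNReal.ofReal (u ω)).map X

theorem isFiniteMeasure_mapPosPart (hu : Integrable u P) : IsFiniteMeasure (mapPosPart P X u) := by
  have := isFiniteMeasure_withDensity_ofReal hu.2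
  unfold mapPosPart
  infer_instance

theorem ae_mapPosPart (hX : Measurable X) {p : E → Prop} (hp : MeasurableSet {x | p x})
    (h : ∀ᵐ ω ∂P, p (X ω)) : ∀ᵐ x ∂mapPosPart P X u, p x :=
  (ae_map_iff hX.aemeasurable hp).mpr ((withDensity_absolutelyContinuous _ _).ae_le h)

theorem integral_mapPosPart (hX : Measurable X) (hu : AEMeasurable u P) {h : E → ℝ}
    (hh : Measurable h) : ∫ x, h x ∂mapPosPart P X u = ∫ ω, h (X ω) * max (u ω) 0 ∂P := by
  rw [mapPosPart, integral_map hX.aemeasurable hh.aestronglyMeasurable,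
    integral_withDensity_eq_integral_toReal_smul₀ hu.ennreal_ofReal (by simp)]
  simp_rw [ENNReal.toReal_ofReal', smul_eq_mul, mul_comm]

theorem integral_comp_mul_eq_sub_mapPosPart (hX : Measurable X) (hu : Integrable u P) {h : E → ℝ}
    (hh : Measurable h) (hhX : MemLp (fun ω ↦ h (X ω)) ⊤ P) :
    ∫ ω, h (X ω) * u ω ∂P = ∫ x, h x ∂mapPosPart P X u - ∫ x, h x ∂mapPosPart P X (-u) := by
  rw [integral_mapPosPart hX hu.aemeasurable hh, integral_mapPosPart hX hu.neg.aemeasurable hh,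
    ← integral_sub (by exact hu.pos_part.mul_of_top_right hhX)
      (by exact hu.neg.pos_part.mul_of_top_right hhX)]
  simp_rw [Pi.neg_apply, ← mul_sub, max_zero_sub_max_neg_zero_eq_self]

end PosPart

variable {ι : Type*} [Fintype ι] {K : Set (ι → ℝ)} {X : Ω → ι → ℝ}

theorem setIntegral_preimage_eq_zero_of_integral_monomial_mul_eq_zero (hK : IsCompact K)
    (hX : Measurable X) (hXK : ∀ᵐ ω ∂P, X ω ∈ K) {u : Ω → ℝ} (hu : Integrable u P)
    (h : ∀ d : ι → ℕ, ∫ ω, (∏ i, X ω i ^ d i) * u ω ∂P = 0)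
    {s : Set (ι → ℝ)} (hs : MeasurableSet s) : ∫ ω in X ⁻¹' s, u ω ∂P = 0 := by
  have := isFiniteMeasure_mapPosPart (X := X) hu
  have := isFiniteMeasure_mapPosPart (X := X) hu.neg
  have parts_eq : mapPosPart P X u = mapPosPart P X (-u) := by
    refine measure_eq_of_integral_monomial_eq hK (ae_mapPosPart hX hK.measurableSet hXK)
      (ae_mapPosPart hX hK.measurableSet hXK) fun d ↦ sub_eq_zero.mp ?_
    rw [← integral_comp_mul_eq_sub_mapPosPart hX hu (h := fun x ↦ ∏ i, x i ^ d i) (by fun_prop)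
      (memLp_top_monomial hK hX.aemeasurable hXK d), h d]
  have indicator_bounded : MemLp (fun ω ↦ s.indicator (1 : (ι → ℝ) → ℝ) (X ω)) ⊤ P :=
    memLp_top_of_bound ((measurable_one.indicator hs).comp hX).aestronglyMeasurable 1
      (ae_of_all _ fun ω ↦ (norm_indicator_le_norm_self _ _).trans (by simp))
  calc ∫ ω in X ⁻¹' s, u ω ∂P = ∫ ω, s.indicator (1 : (ι → ℝ) → ℝ) (X ω) * u ω ∂P := by
        rw [← integral_indicator (hX hs)]
        congr with ω
        by_cases hω : X ω ∈ s <;> simp [hω]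
    _ = 0 := by
        rw [integral_comp_mul_eq_sub_mapPosPart hX hu (measurable_one.indicator hs)
          indicator_bounded, parts_eq, sub_self]

theorem condExp_comap_ae_eq_of_integral_monomial_mul_eq [IsFiniteMeasure P] (hK : IsCompact K)
    (hX : Measurable X) (hXK : ∀ᵐ ω ∂P, X ω ∈ K) {Y : Ω → ℝ} (hY : Integrable Y P)
    {f : (ι → ℝ) → ℝ} (hf : Integrable f (P.map X))
    (h : ∀ d : ι → ℕ, ∫ ω, (∏ i, X ω i ^ d i) * Y ω ∂P
      = ∫ x, (∏ i, x i ^ d i) * f x ∂(P.map X)) :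
    P[Y | MeasurableSpace.comap X inferInstance] =ᵐ[P] f ∘ X := by
  have hfX : Integrable (f ∘ X) P := hf.comp_measurable hX
  have residual_moment (d : ι → ℕ) : ∫ ω, (∏ i, X ω i ^ d i) * (Y - f ∘ X) ω ∂P = 0 := by
    have bounded := memLp_top_monomial hK hX.aemeasurable hXK d
    have monomial_measurable : Measurable fun x : ι → ℝ ↦ ∏ i, x i ^ d i := by fun_prop
    simp_rw [Pi.sub_apply, mul_sub]
    rw [integral_sub (by exact hY.mul_of_top_right bounded)
      (by exact hfX.mul_of_top_right bounded), h d, integral_map hX.aemeasurable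
      (by exact monomial_measurable.aestronglyMeasurable.mul hf.aestronglyMeasurable)]
    exact sub_self _
  refine (ae_eq_condExp_of_forall_setIntegral_eq hX.comap_le hY (fun _ _ _ ↦ hfX.integrableOn) ?_
    (hf.aestronglyMeasurable.comp_ae_measurable' hX.aemeasurable)).symm
  rintro _ ⟨s, hs, rfl⟩ -
  have residual_zero := setIntegral_preimage_eq_zero_of_integral_monomial_mul_eq_zero hK hX hXK
    (hY.sub hfX) residual_moment hs
  simp_rw [Pi.sub_apply] at residual_zero
  rw [integral_sub hY.integrableOn hfX.integrableOn] at residual_zero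
  exact (sub_eq_zero.mp residual_zero).symm

end ConditionalMean

section WeightedJensen

theorem aestronglyMeasurable_comp_of_continuousOn {α E : Type*} [MeasurableSpace α]
    {μ : Measure α} [TopologicalSpace E] [SecondCountableTopology E] [MeasurableSpace E]
    [OpensMeasurableSpace E] {S : Set E} (hS : MeasurableSet S) {g : E → ℝ} (hg : ContinuousOn g S)
    {Y : α → E} (hY : AEMeasurable Y μ) (hYS : ∀ᵐ a ∂μ, Y a ∈ S) :
    AEStronglyMeasurable (g ∘ Y) μ := by
  have g_measurable := hg.aestronglyMeasurable (μ := μ.map Y) hS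
  rw [Measure.restrict_eq_self_of_ae_mem ((ae_map_iff hY hS).mpr hYS)] at g_measurable
  exact g_measurable.comp_aemeasurable hY

variable {Ω : Type*} {m m₀ : MeasurableSpace Ω} {P : Measure[m₀] Ω} [IsFiniteMeasure P]
  {E : Type*} [NormedAddCommGroup E] [NormedSpace ℝ E] [CompleteSpace E]
  [SecondCountableTopology E] {S : Set E} {Y : Ω → E} {g : E → ℝ}

theorem integrable_convexOn_comp_condExp (hm : m ≤ m₀) (hS : IsClosed S) (hg : ConvexOn ℝ S g)
    (hgc : ContinuousOn g S) (hYS : ∀ᵐ ω ∂P, Y ω ∈ S) (hY : Integrable Y P)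
    (hgY : Integrable (g ∘ Y) P) : Integrable (g ∘ P[Y | m]) P := by
  borelize E
  have condExp_mem : ∀ᵐ ω ∂P, P[Y | m] ω ∈ S := hg.1.condExp_mem hm hY hS hYS
  obtain ⟨l, c, affine_le, -⟩ := hg.real_sSup_of_nat_affine_eq hS hgc.lowerSemicontinuousOn
  -- Jensen bounds `g ∘ P[Y | m]` above; an affine minorant of `g` bounds it below.
  exact integrable_of_le_of_le (aestronglyMeasurable_comp_of_continuousOn hS.measurableSet hgc
      integrable_condExp.aemeasurable condExp_mem)
    (condExp_mem.mono fun ω hω ↦ affine_le 0 ⟨_, hω⟩)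
    (hg.map_condExp_le hm hgc.lowerSemicontinuousOn hYS hS hY hgY)
    (((l 0).integrable_comp integrable_condExp).add (integrable_const (c 0))) integrable_condExp

theorem integral_mul_convexOn_condExp_le (hm : m ≤ m₀) (hS : IsClosed S) (hg : ConvexOn ℝ S g)
    (hgc : ContinuousOn g S) (hYS : ∀ᵐ ω ∂P, Y ω ∈ S) (hY : Integrable Y P)
    (hgY : Integrable (g ∘ Y) P) {w : Ω → ℝ} (hwm : AEStronglyMeasurable[m] w P)
    (hw : MemLp w ⊤ P) (hw0 : 0 ≤ᵐ[P] w) :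
    ∫ ω, w ω * g (P[Y | m] ω) ∂P ≤ ∫ ω, w ω * g (Y ω) ∂P := by
  have hwgY : Integrable (w * (g ∘ Y)) P := hgY.mul_of_top_right hw
  calc ∫ ω, w ω * g (P[Y | m] ω) ∂P ≤ ∫ ω, w ω * P[g ∘ Y | m] ω ∂P := by
        refine integral_mono_ae
          ((integrable_convexOn_comp_condExp hm hS hg hgc hYS hY hgY).mul_of_top_right hw)
          (integrable_condExp.mul_of_top_right hw) ?_
        filter_upwards [hg.map_condExp_le hm hgc.lowerSemicontinuousOn hYS hS hY hgY, hw0]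
          with ω jensen nonneg using mul_le_mul_of_nonneg_left jensen nonneg
    _ = ∫ ω, P[w * (g ∘ Y) | m] ω ∂P :=
        integral_congr_ae (condExp_mul_of_aestronglyMeasurable_left hwm hwgY hgY).symm
    _ = ∫ ω, w ω * g (Y ω) ∂P := integral_condExp hm

theorem integral_map_mul_convexOn_le_of_condExp_eq {F : Type*} [MeasurableSpace F] {X : Ω → F}
    (hX : Measurable X) (hS : IsClosed S) (hg : ConvexOn ℝ S g) (hgc : ContinuousOn g S)
    (hYS : ∀ᵐ ω ∂P, Y ω ∈ S) (hY : Integrable Y P) (hgY : Integrable (g ∘ Y) P) {f : F → E}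
    (hf : AEStronglyMeasurable f (P.map X))
    (hcond : P[Y | MeasurableSpace.comap X inferInstance] =ᵐ[P] f ∘ X)
    {w : F → ℝ} (hw : MemLp w ⊤ (P.map X)) (hw0 : 0 ≤ᵐ[P.map X] w) :
    ∫ x, w x * g (f x) ∂(P.map X) ≤ ∫ ω, w (X ω) * g (Y ω) ∂P := by
  borelize E
  have f_mem : f ⁻¹' S ∈ ae (P.map X) := by
    rw [mem_ae_iff, Measure.map_apply₀ hX.aemeasurable
      (hf.aemeasurable.nullMeasurableSet_preimage hS.measurableSet).compl]
    filter_upwards [hg.1.condExp_mem hX.comap_le hY hS hYS, hcond] with ω condExp_mem condExp_eq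
    rwa [condExp_eq] at condExp_mem
  have gf_measurable :=
    aestronglyMeasurable_comp_of_continuousOn hS.measurableSet hgc hf.aemeasurable f_mem
  calc ∫ x, w x * g (f x) ∂(P.map X) = ∫ ω, w (X ω) * g (f (X ω)) ∂P :=
        integral_map hX.aemeasurable (hw.aestronglyMeasurable.mul gf_measurable)
    _ = ∫ ω, w (X ω) * g (P[Y | MeasurableSpace.comap X inferInstance] ω) ∂P :=
        integral_congr_ae (hcond.mono fun ω hω ↦ by simp only [hω, Function.comp_apply])
    _ ≤ ∫ ω, w (X ω) * g (Y ω) ∂P :=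
        integral_mul_convexOn_condExp_le hX.comap_le hS hg hgc hYS hY hgY
          (hw.aestronglyMeasurable.comp_ae_measurable' hX.aemeasurable)
          (hw.comp_of_map hX.aemeasurable) (ae_of_ae_map hX.aemeasurable hw0)

end WeightedJensen

theorem moment_domination_even_x_general {ι : Type*} [Fintype ι]
    {X : Set (ι → ℝ)} (hX : IsCompact X) {S : Set ℝ} (hS : IsClosed S)
    {lam : Measure (ι → ℝ)} [IsFiniteMeasure lam] (hlam : ∀ᵐ x ∂lam, x ∈ X)
    {f : (ι → ℝ) → ℝ} (hf : Integrable f lam)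
    {φ : Measure ((ι → ℝ) × ℝ)} [IsFiniteMeasure φ]
    (hφ : ∀ᵐ p ∂φ, p ∈ X ×ˢ S) (hy : Integrable Prod.snd φ)
    (hmom0 : ∀ d : ι → ℕ, ∫ p, ∏ i, p.1 i ^ d i ∂φ = ∫ x, ∏ i, x i ^ d i ∂lam)
    (hmom1 : ∀ d : ι → ℕ,
      ∫ p, (∏ i, p.1 i ^ d i) * p.2 ∂φ = ∫ x, (∏ i, x i ^ d i) * f x ∂lam)
    {w : (ι → ℝ) → ℝ} (hw : MemLp w ⊤ lam) (hw0 : 0 ≤ᵐ[lam] w)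
    {g : ℝ → ℝ} (hg : ConvexOn ℝ S g) (hgc : ContinuousOn g S)
    (hgy : Integrable (fun p ↦ g p.2) φ) :
    ∫ x, w x * g (f x) ∂lam ≤ ∫ p, w p.1 * g p.2 ∂φ := by
  have hφX : ∀ᵐ p ∂φ, p.1 ∈ X := hφ.mono fun _ hp ↦ hp.1
  have map_fst : φ.map Prod.fst = lam := by
    refine measure_eq_of_integral_monomial_eq hX
      ((ae_map_iff measurable_fst.aemeasurable hX.measurableSet).mpr hφX) hlam fun d ↦ ?_
    have monomial_measurable : Measurable fun x : ι → ℝ ↦ ∏ i, x i ^ d i := by fun_prop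
    rw [integral_map measurable_fst.aemeasurable monomial_measurable.aestronglyMeasurable, hmom0 d]
  subst map_fst
  have condExp_snd_eq :=
    condExp_comap_ae_eq_of_integral_monomial_mul_eq hX measurable_fst hφX hy hf hmom1
  exact integral_map_mul_convexOn_le_of_condExp_eq measurable_fst hS hg hgc
    (hφ.mono fun _ hp ↦ hp.2) hy hgy hf.aestronglyMeasurable condExp_snd_eq hw hw0

/-- If `X ⊆ ℝ^n` is compact (not necessarily contained in the nonnegative
orthant) and `φ` is a finite nonnegative Borel measure on `X × Y` with finite moments
matching those of `μ = δ_{f(x)}(dy) λ(dx)` at all orders `(d_x, 0)` and `(d_x, 1)`, then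
`φ_{(2d_x, d_y)} ≥ μ_{(2d_x, d_y)}` for all `(d_x, d_y) ∈ ℕ^n × ℕ`. -/
theorem moment_domination_even_x
    (n : ℕ) (hn : 1 ≤ n)
    (X : Set (Fin n → ℝ)) (hXc : IsCompact X)
    (γ : ℝ) (hγ : 0 < γ)
    (lam : Measure (Fin n → ℝ)) [IsProbabilityMeasure lam] (hlam : lam Xᶜ = 0)
    (f : (Fin n → ℝ) → ℝ) (hf : Measurable f) (hfY : ∀ x ∈ X, f x ∈ Icc 0 γ)
    (φ : Measure ((Fin n → ℝ) × ℝ)) [IsFiniteMeasure φ]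
    (hφsupp : φ ((X ×ˢ Icc (0:ℝ) γ)ᶜ) = 0)
    (hφint : ∀ d : (Fin n → ℕ) × ℕ,
      Integrable (fun p : (Fin n → ℝ) × ℝ => (∏ i, p.1 i ^ d.1 i) * p.2 ^ d.2) φ)
    (hmom0 : ∀ dx : Fin n → ℕ,
      ∫ p : (Fin n → ℝ) × ℝ, (∏ i, p.1 i ^ dx i) ∂φ = ∫ x, ∏ i, x i ^ dx i ∂lam)
    (hmom1 : ∀ dx : Fin n → ℕ,
      ∫ p : (Fin n → ℝ) × ℝ, (∏ i, p.1 i ^ dx i) * p.2 ∂φ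
        = ∫ x, (∏ i, x i ^ dx i) * f x ∂lam) :
    ∀ d : (Fin n → ℕ) × ℕ,
      ∫ x, (∏ i, x i ^ (2 * d.1 i)) * f x ^ d.2 ∂lam
        ≤ ∫ p : (Fin n → ℝ) × ℝ, (∏ i, p.1 i ^ (2 * d.1 i)) * p.2 ^ d.2 ∂φ := by
  have hlamX : ∀ᵐ x ∂lam, x ∈ X := hlam
  exact fun d ↦ moment_domination_even_x_general hXc isClosed_Icc hlamX
    (.of_mem_Icc 0 γ hf.aemeasurable (hlamX.mono hfY)) hφsupp (by simpa using hφint (0, 1))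
    hmom0 hmom1 (memLp_top_monomial hXc aemeasurable_id hlamX fun i ↦ 2 * d.1 i)
    (ae_of_all _ fun x ↦ Finset.prod_nonneg fun i _ ↦ (even_two_mul (d.1 i)).pow_nonneg _)
    (g := fun y ↦ y ^ d.2) ((convexOn_pow d.2).subset Icc_subset_Ici_self (convex_Icc 0 γ))
    (by fun_prop) (by simpa using hφint (0, d.2))
end
end

section
/- Suppose θ_d > 0 for all d. Then the measure μ is the unique optimal solution of the linear program inf { ∫_{X×Y} T dφ : φ a finite nonnegative Borel measure on X×Y with ∫_{X×Y} x^{d_x} y^{d_y} dφ = μ_{(d_x,d_y)} for all (d_x,d_y) ∈ D }. That is, every feasible φ satisfies ∫ T dμ ≤ ∫ T dφ, and ∫ T dφ = ∫ T dμ implies φ = μ. -/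
open MeasureTheory Set

noncomputable section

/-!
A measure carried by a compact set is determined by its moments. The moments of order zero in `y`
therefore say that a feasible `φ` has first marginal `λ`, and those of order one say that
`y - f x` is orthogonal in `φ` to every function of `x`: the conditional mean of `y` given `x` is
`f x`. Integrating the tangent line inequality `y ^ k ≥ f x ^ k + k * f x ^ (k - 1) * (y - f x)`
against the weight `x ^ a` makes the linear term vanish, so every moment of `φ` is at least the
corresponding moment of the graph measure. The excess is the integral of a Bregman divergence,
and if it vanishes for `a = 0` and some `k ≥ 2`, strict convexity gives `y = f x` `φ`-a.e.
-/

section PowBregman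

/-- The Bregman divergence of `t ↦ t ^ k`: the excess at `t` of the power over its tangent line at
`s`. For `k = 0` the exponent `k - 1` is truncated, harmlessly since its coefficient is `0`. -/
def powBregman (k : ℕ) (s t : ℝ) : ℝ := t ^ k - s ^ k - k * s ^ (k - 1) * (t - s)

lemma powBregman_self (k : ℕ) (s : ℝ) : powBregman k s s = 0 := by simp [powBregman]

lemma mul_powBregman (k : ℕ) (w s t : ℝ) :
    w * powBregman k s t = w * t ^ k - w * s ^ k - k * (w * s ^ (k - 1) * (t - s)) := by
  unfold powBregman
  ring

lemma powBregman_pos {k : ℕ} (hk : 2 ≤ k) {s t : ℝ} (hs : 0 ≤ s) (ht : 0 ≤ t) (hst : s ≠ t) :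
    0 < powBregman k s t := by
  have hconv := strictConvexOn_pow hk
  have hderiv := hasDerivAt_pow k s
  rcases hst.lt_or_gt with hlt | hgt
  · have hslope := hconv.lt_slope_of_hasDerivAt hs ht hlt hderiv
    rw [slope_def_field, lt_div_iff₀ (sub_pos.2 hlt)] at hslope
    exact sub_pos.2 hslope
  · have hslope := hconv.slope_lt_of_hasDerivAt ht hs hgt hderiv
    rw [slope_def_field, div_lt_iff₀ (sub_pos.2 hgt)] at hslope
    unfold powBregman
    linarith

lemma powBregman_nonneg (k : ℕ) {s t : ℝ} (hs : 0 ≤ s) (ht : 0 ≤ t) : 0 ≤ powBregman k s t := by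
  obtain rfl | hst := eq_or_ne s t
  · exact (powBregman_self k s).ge
  match k with
  | 0 | 1 => simp [powBregman]
  | k + 2 => exact (powBregman_pos (by lia) hs ht hst).le

variable {Ω : Type*} [MeasurableSpace Ω] {ν : Measure Ω} {w s t : Ω → ℝ} {k : ℕ}

lemma integrable_mul_powBregman (ht : Integrable (fun ω => w ω * t ω ^ k) ν)
    (hs : Integrable (fun ω => w ω * s ω ^ k) ν)
    (hst : Integrable (fun ω => w ω * s ω ^ (k - 1) * (t ω - s ω)) ν) :
    Integrable (fun ω => w ω * powBregman k (s ω) (t ω)) ν := by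
  simp only [mul_powBregman]
  exact (ht.sub hs).sub (hst.const_mul _)

lemma integral_mul_powBregman (ht : Integrable (fun ω => w ω * t ω ^ k) ν)
    (hs : Integrable (fun ω => w ω * s ω ^ k) ν)
    (hst : Integrable (fun ω => w ω * s ω ^ (k - 1) * (t ω - s ω)) ν)
    (hzero : ∫ ω, w ω * s ω ^ (k - 1) * (t ω - s ω) ∂ν = 0) :
    ∫ ω, w ω * powBregman k (s ω) (t ω) ∂ν = ∫ ω, w ω * t ω ^ k ∂ν - ∫ ω, w ω * s ω ^ k ∂ν := by
  have hts : Integrable (fun ω => w ω * t ω ^ k - w ω * s ω ^ k) ν := ht.sub hs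
  simp only [mul_powBregman]
  rw [integral_sub hts (hst.const_mul _), integral_sub ht hs, integral_const_mul, hzero, mul_zero,
    sub_zero]

end PowBregman

section SignedDensity

variable {Ω : Type*} [MeasurableSpace Ω] {ν : Measure Ω} {α : Type*} [MeasurableSpace α]

/-- The pushforward under `Z` of the positive part of the signed measure `u · ν`; its negative part
is `mapPosDensity ν Z (-u)`. -/
def mapPosDensity (ν : Measure Ω) (Z : Ω → α) (u : Ω → ℝ) : Measure α :=
  (ν.withDensity fun ω => ENNReal.ofReal (u ω)).map Z

variable {Z : Ω → α} {u : Ω → ℝ}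

lemma isFiniteMeasure_mapPosDensity (Z : Ω → α) (hu : Integrable u ν) :
    IsFiniteMeasure (mapPosDensity ν Z u) := by
  have := isFiniteMeasure_withDensity_ofReal hu.hasFiniteIntegral
  unfold mapPosDensity
  infer_instance

lemma mapPosDensity_absolutelyContinuous (hZ : Measurable Z) :
    mapPosDensity ν Z u ≪ ν.map Z :=
  (withDensity_absolutelyContinuous _ _).map hZ

lemma integral_mapPosDensity (hZ : Measurable Z) (hu : AEMeasurable u ν)
    {g : α → ℝ} (hg : AEStronglyMeasurable g (ν.map Z)) :
    ∫ x, g x ∂mapPosDensity ν Z u = ∫ ω, g (Z ω) * max (u ω) 0 ∂ν := by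
  rw [mapPosDensity,
    integral_map hZ.aemeasurable (hg.mono_ac (mapPosDensity_absolutelyContinuous hZ)),
    integral_withDensity_eq_integral_toReal_smul₀ hu.ennreal_ofReal (by simp)]
  simp only [ENNReal.toReal_ofReal', smul_eq_mul, mul_comm]

lemma integrable_mul_max_zero {g : Ω → ℝ} (hg : AEStronglyMeasurable g ν)
    (hu : AEStronglyMeasurable u ν) (hgu : Integrable (fun ω => g ω * u ω) ν) :
    Integrable (fun ω => g ω * max (u ω) 0) ν := by
  refine hgu.mono (hg.mul (hu.sup aestronglyMeasurable_const)) (.of_forall fun ω => ?_)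
  simp only [norm_mul]
  gcongr
  simpa using abs_max_sub_max_le_abs (u ω) 0 0

lemma integral_mapPosDensity_sub_neg (hZ : Measurable Z) (hu : AEStronglyMeasurable u ν)
    {g : α → ℝ} (hg : AEStronglyMeasurable g (ν.map Z))
    (hgu : Integrable (fun ω => g (Z ω) * u ω) ν) :
    ∫ x, g x ∂mapPosDensity ν Z u - ∫ x, g x ∂mapPosDensity ν Z (-u)
      = ∫ ω, g (Z ω) * u ω ∂ν := by
  have hgZ : AEStronglyMeasurable (fun ω => g (Z ω)) ν := hg.comp_measurable hZ
  have hpos := integrable_mul_max_zero hgZ hu hgu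
  have hneg := integrable_mul_max_zero (u := -u) hgZ hu.neg (by simpa using hgu.fun_neg)
  rw [integral_mapPosDensity hZ hu.aemeasurable hg,
    integral_mapPosDensity hZ hu.neg.aemeasurable hg, ← integral_sub hpos hneg]
  simp only [Pi.neg_apply, ← mul_sub, max_zero_sub_max_neg_zero_eq_self]

end SignedDensity

lemma eq_map_graph_of_ae_snd_eq {α β : Type*} [MeasurableSpace α] [MeasurableSpace β]
    {φ : Measure (α × β)} {f : α → β} (hf : AEMeasurable f (φ.map Prod.fst))
    (h : ∀ᵐ p ∂φ, p.2 = f p.1) : φ = (φ.map Prod.fst).map fun x => (x, f x) := by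
  have hgraph : (fun p : α × β => (p.1, f p.1)) =ᵐ[φ] id :=
    h.mono fun p hp => Prod.ext rfl hp.symm
  calc φ = φ.map fun p => (p.1, f p.1) := by rw [Measure.map_congr hgraph, Measure.map_id]
    _ = _ := (AEMeasurable.map_map_of_aemeasurable (aemeasurable_id'.prodMk hf)
      measurable_fst.aemeasurable).symm

section Moments

variable {ι : Type*}

/-- The bounded continuous functions on `K ⊆ ℝ^ι` that are restrictions of polynomials, as a star
subalgebra, to which the Stone–Weierstrass criterion for equality of measures applies. -/
def polynomialSubalgebra (K : Set (ι → ℝ)) :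
    StarSubalgebra ℝ (BoundedContinuousFunction K ℝ) where
  carrier := {g | ∃ p : MvPolynomial ι ℝ, ∀ x : K, g x = MvPolynomial.eval x.1 p}
  mul_mem' := by
    rintro g h ⟨p, hp⟩ ⟨q, hq⟩
    exact ⟨p * q, fun x => by simp [hp, hq]⟩
  add_mem' := by
    rintro g h ⟨p, hp⟩ ⟨q, hq⟩
    exact ⟨p + q, fun x => by simp [hp, hq]⟩
  algebraMap_mem' r := ⟨MvPolynomial.C r, fun x => by simp⟩
  star_mem' := by
    rintro g ⟨p, hp⟩
    exact ⟨p, fun x => by simp [hp]⟩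

lemma separatesPoints_polynomialSubalgebra {K : Set (ι → ℝ)} (hK : IsCompact K) :
    ((polynomialSubalgebra K).map
      (BoundedContinuousFunction.toContinuousMapStarₐ ℝ)).SeparatesPoints := by
  have : CompactSpace K := isCompact_iff_compactSpace.mp hK
  intro x y hxy
  obtain ⟨i, hi⟩ : ∃ i, x.1 i ≠ y.1 i := Function.ne_iff.1 (Subtype.coe_ne_coe.2 hxy)
  let coord : BoundedContinuousFunction K ℝ :=
    .mkOfCompact ⟨fun z => z.1 i, (continuous_apply i).comp continuous_subtype_val⟩
  have hcoord : coord ∈ polynomialSubalgebra K := ⟨MvPolynomial.X i, fun z => by simp [coord]⟩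
  exact ⟨coord, ⟨_, ⟨coord, hcoord, rfl⟩, rfl⟩, hi⟩

variable [Fintype ι]

lemma integral_eval_eq_of_moment_eq {P Q : Measure (ι → ℝ)}
    (hP : ∀ a : ι → ℕ, Integrable (fun x => ∏ i, x i ^ a i) P)
    (hQ : ∀ a : ι → ℕ, Integrable (fun x => ∏ i, x i ^ a i) Q)
    (h : ∀ a : ι → ℕ, ∫ x, ∏ i, x i ^ a i ∂P = ∫ x, ∏ i, x i ^ a i ∂Q)
    (p : MvPolynomial ι ℝ) :
    ∫ x, MvPolynomial.eval x p ∂P = ∫ x, MvPolynomial.eval x p ∂Q := by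
  simp only [MvPolynomial.eval_eq']
  rw [integral_finsetSum _ fun (s : ι →₀ ℕ) _ => (hP s).const_mul (p.coeff s),
    integral_finsetSum _ fun (s : ι →₀ ℕ) _ => (hQ s).const_mul (p.coeff s)]
  simp only [integral_const_mul, h]

lemma integrable_of_continuous_of_ae_mem_isCompact {E F : Type*} [TopologicalSpace E] [T2Space E]
    [MeasurableSpace E] [OpensMeasurableSpace E] [NormedAddCommGroup F] {K : Set E}
    (hK : IsCompact K) {P : Measure E} [IsFiniteMeasure P] (hP : ∀ᵐ x ∂P, x ∈ K)
    {g : E → F} (hg : Continuous g) : Integrable g P := by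
  rw [← Measure.restrict_eq_self_of_ae_mem hP]
  exact hg.continuousOn.integrableOn_compact hK

theorem ext_of_moment_eq {K : Set (ι → ℝ)} (hK : IsCompact K) {P Q : Measure (ι → ℝ)}
    [IsFiniteMeasure P] [IsFiniteMeasure Q] (hP : ∀ᵐ x ∂P, x ∈ K) (hQ : ∀ᵐ x ∂Q, x ∈ K)
    (h : ∀ a : ι → ℕ, ∫ x, ∏ i, x i ^ a i ∂P = ∫ x, ∏ i, x i ^ a i ∂Q) : P = Q := by
  have hKm : MeasurableSet K := hK.measurableSet
  have : PolishSpace K := hK.isClosed.polishSpace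
  have hPK := Measure.restrict_eq_self_of_ae_mem hP
  have hQK := Measure.restrict_eq_self_of_ae_mem hQ
  suffices P.comap ((↑) : K → ι → ℝ) = Q.comap (↑) by
    rw [← hPK, ← hQK, ← map_comap_subtype_coe hKm, this, map_comap_subtype_coe hKm]
  refine ext_of_forall_mem_subalgebra_integral_eq_of_polish
    (separatesPoints_polynomialSubalgebra hK) ?_
  rintro g ⟨p, hp⟩
  simp only [hp]
  rw [integral_subtype_comap hKm fun x => MvPolynomial.eval x p,
    integral_subtype_comap hKm fun x => MvPolynomial.eval x p, hPK, hQK]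
  exact integral_eval_eq_of_moment_eq
    (fun a => integrable_of_continuous_of_ae_mem_isCompact hK hP (by fun_prop))
    (fun a => integrable_of_continuous_of_ae_mem_isCompact hK hQ (by fun_prop)) h p

theorem integral_comp_mul_eq_zero_of_moment_eq_zero {Ω : Type*} [MeasurableSpace Ω]
    {ν : Measure Ω} {K : Set (ι → ℝ)} (hK : IsCompact K)
    {Z : Ω → ι → ℝ} (hZ : Measurable Z) (hZK : ∀ᵐ ω ∂ν, Z ω ∈ K)
    {u : Ω → ℝ} (hu : Integrable u ν) (h : ∀ a : ι → ℕ, ∫ ω, (∏ i, Z ω i ^ a i) * u ω ∂ν = 0)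
    {g : (ι → ℝ) → ℝ} (hg : AEStronglyMeasurable g (ν.map Z))
    (hgu : Integrable (fun ω => g (Z ω) * u ω) ν) :
    ∫ ω, g (Z ω) * u ω ∂ν = 0 := by
  have hum := hu.aestronglyMeasurable
  have hsupp (v : Ω → ℝ) : ∀ᵐ x ∂mapPosDensity ν Z v, x ∈ K :=
    (mapPosDensity_absolutelyContinuous hZ).ae_le
      ((ae_map_iff hZ.aemeasurable hK.measurableSet).2 hZK)
  have hmono (a : ι → ℕ) : Integrable (fun ω => (∏ i, Z ω i ^ a i) * u ω) ν := by
    obtain ⟨C, hC⟩ := hK.exists_bound_of_continuousOn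
      (f := fun x : ι → ℝ => ∏ i, x i ^ a i) (by fun_prop)
    exact hu.bdd_mul (Measurable.aestronglyMeasurable (by fun_prop)) (hZK.mono fun ω hω => hC _ hω)
  have heq : mapPosDensity ν Z u = mapPosDensity ν Z (-u) := by
    have := isFiniteMeasure_mapPosDensity Z hu
    have := isFiniteMeasure_mapPosDensity Z hu.neg
    refine ext_of_moment_eq hK (hsupp _) (hsupp _) fun a => sub_eq_zero.1 ?_
    rw [integral_mapPosDensity_sub_neg hZ hum
      (Measurable.aestronglyMeasurable (by fun_prop)) (hmono a), h a]
  rw [← integral_mapPosDensity_sub_neg hZ hum hg hgu, heq, sub_self]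

end Moments

section GraphMeasure

variable {ι : Type*} [Fintype ι]

/-- The monomial `x ^ d_x * y ^ d_y` on `ℝ^ι × ℝ`, for a multi-index `d = (d_x, d_y)`. -/
def jointMonomial (d : (ι → ℕ) × ℕ) (p : (ι → ℝ) × ℝ) : ℝ :=
  (∏ i, p.1 i ^ d.1 i) * p.2 ^ d.2

/-- The objective function `T` of the linear program, with coefficients `θ`. -/
def monomialSeries (θ : (ι → ℕ) × ℕ → ℝ) (p : (ι → ℝ) × ℝ) : ℝ :=
  ∑' d, θ d * jointMonomial d p

@[fun_prop]
lemma measurable_jointMonomial (d : (ι → ℕ) × ℕ) : Measurable (jointMonomial d) := by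
  unfold jointMonomial
  fun_prop

lemma aestronglyMeasurable_jointMonomial_comp {Ω : Type*} [MeasurableSpace Ω] {ν : Measure Ω}
    {q : Ω → (ι → ℝ) × ℝ} (hq : AEMeasurable q ν) (d : (ι → ℕ) × ℕ) :
    AEStronglyMeasurable (fun ω => jointMonomial d (q ω)) ν :=
  ((measurable_jointMonomial d).comp_aemeasurable hq).aestronglyMeasurable

lemma abs_jointMonomial_le {γ : ℝ} {p : (ι → ℝ) × ℝ} (hp : p ∈ Icc 0 1 ×ˢ Icc 0 γ)
    (d : (ι → ℕ) × ℕ) : |jointMonomial d p| ≤ γ ^ d.2 := by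
  obtain ⟨⟨hx0, hx1⟩, hy0, hyγ⟩ := hp
  rw [jointMonomial, abs_mul, Finset.abs_prod, ← one_mul (γ ^ d.2)]
  gcongr
  · refine Finset.prod_le_one (fun i _ => abs_nonneg _) fun i _ => ?_
    rw [abs_of_nonneg (pow_nonneg (hx0 i) _)]
    exact pow_le_one₀ (hx0 i) (hx1 i)
  · rw [abs_of_nonneg (pow_nonneg hy0 _)]
    gcongr

lemma integrable_jointMonomial_comp {Ω : Type*} [MeasurableSpace Ω] {ν : Measure Ω}
    [IsFiniteMeasure ν] {γ : ℝ} {q : Ω → (ι → ℝ) × ℝ} (hq : AEMeasurable q ν)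
    (hbox : ∀ᵐ ω ∂ν, q ω ∈ Icc 0 1 ×ˢ Icc 0 γ) (d : (ι → ℕ) × ℕ) :
    Integrable (fun ω => jointMonomial d (q ω)) ν :=
  .of_bound (aestronglyMeasurable_jointMonomial_comp hq d) (γ ^ d.2)
    (hbox.mono fun _ hω => abs_jointMonomial_le hω d)

lemma hasSum_integral_monomialSeries {φ : Measure ((ι → ℝ) × ℝ)} [IsFiniteMeasure φ] {γ : ℝ}
    {θ : (ι → ℕ) × ℕ → ℝ} (hsum : Summable fun d => θ d * γ ^ d.2)
    (hbox : ∀ᵐ p ∂φ, p ∈ Icc 0 1 ×ˢ Icc 0 γ) :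
    HasSum (fun d => θ d * ∫ p, jointMonomial d p ∂φ) (∫ p, monomialSeries θ p ∂φ) := by
  have hbound (d : (ι → ℕ) × ℕ) {p : (ι → ℝ) × ℝ} (hp : p ∈ Icc 0 1 ×ˢ Icc 0 γ) :
      ‖θ d * jointMonomial d p‖ ≤ |θ d * γ ^ d.2| := by
    rw [norm_mul, abs_mul]
    exact mul_le_mul_of_nonneg_left ((abs_jointMonomial_le hp d).trans (le_abs_self _))
      (norm_nonneg _)
  simp only [← integral_const_mul]
  refine hasSum_integral_of_dominated_convergence (fun d _ => |θ d * γ ^ d.2|)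
    (fun d => Measurable.aestronglyMeasurable (by fun_prop)) (fun d => hbox.mono fun p => hbound d)
    (.of_forall fun _ => hsum.abs) (integrable_const _) (hbox.mono fun p hp => ?_)
  exact (Summable.of_norm_bounded hsum.abs fun d => hbound d hp).hasSum

/-- Feasibility of `φ` for the linear program on `[0,1]^ι × [0,γ]`: its moments of order at most one
in `y` are those of the graph measure of `f` over `lam`. Finiteness of `φ` is left to an instance
argument. -/
structure IsFeasible (γ : ℝ) (lam : Measure (ι → ℝ)) (f : (ι → ℝ) → ℝ)
    (φ : Measure ((ι → ℝ) × ℝ)) : Prop where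
  ae_mem : ∀ᵐ p ∂φ, p ∈ Icc 0 1 ×ˢ Icc 0 γ
  integral_eq : ∀ d : (ι → ℕ) × ℕ, d.2 ≤ 1 →
    ∫ p, jointMonomial d p ∂φ = ∫ x, jointMonomial d (x, f x) ∂lam

namespace IsFeasible

variable {γ : ℝ} {lam : Measure (ι → ℝ)} [IsFiniteMeasure lam] {f : (ι → ℝ) → ℝ}
  {φ : Measure ((ι → ℝ) × ℝ)} [IsFiniteMeasure φ]

lemma map_fst_eq (hφ : IsFeasible γ lam f φ) (hlam : ∀ᵐ x ∂lam, x ∈ Icc 0 1) :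
    φ.map Prod.fst = lam := by
  refine ext_of_moment_eq isCompact_Icc ?_ hlam fun a => ?_
  · exact (ae_map_iff measurable_fst.aemeasurable measurableSet_Icc).2
      (hφ.ae_mem.mono fun p hp => hp.1)
  · rw [integral_map measurable_fst.aemeasurable (Measurable.aestronglyMeasurable (by fun_prop))]
    simpa [jointMonomial] using hφ.integral_eq (a, 0) zero_le_one

variable (hφ : IsFeasible γ lam f φ) (hf : AEMeasurable f lam)
  (hlam : ∀ᵐ x ∂lam, (x, f x) ∈ Icc 0 1 ×ˢ Icc 0 γ)

include hφ hlam

lemma measurePreserving_fst : MeasurePreserving Prod.fst φ lam :=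
  ⟨measurable_fst, hφ.map_fst_eq (hlam.mono fun _ hx => hx.1)⟩

lemma ae_graph_mem : ∀ᵐ p ∂φ, (p.1, f p.1) ∈ Icc 0 1 ×ˢ Icc 0 γ :=
  (hφ.measurePreserving_fst hlam).quasiMeasurePreserving.ae hlam

lemma ae_powBregman_nonneg (k : ℕ) : ∀ᵐ p ∂φ, 0 ≤ powBregman k (f p.1) p.2 := by
  filter_upwards [hφ.ae_mem, hφ.ae_graph_mem hlam] with p hp hfp
    using powBregman_nonneg k hfp.2.1 hp.2.1

lemma integral_prod_pow_mul_powBregman_nonneg (a : ι → ℕ) (k : ℕ) :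
    0 ≤ ∫ p, (∏ i, p.1 i ^ a i) * powBregman k (f p.1) p.2 ∂φ := by
  refine integral_nonneg_of_ae ?_
  filter_upwards [hφ.ae_mem, hφ.ae_powBregman_nonneg hlam k] with p hp hB
    using mul_nonneg (Finset.prod_nonneg fun i _ => pow_nonneg (hp.1.1 i) _) hB

include hf

lemma aemeasurable_comp_fst : AEMeasurable (fun p => f p.1) φ :=
  hf.comp_quasiMeasurePreserving (hφ.measurePreserving_fst hlam).quasiMeasurePreserving

lemma integral_jointMonomial_graph (d : (ι → ℕ) × ℕ) :
    ∫ p, jointMonomial d (p.1, f p.1) ∂φ = ∫ x, jointMonomial d (x, f x) ∂lam := by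
  have hfst := hφ.measurePreserving_fst hlam
  have hm := aestronglyMeasurable_jointMonomial_comp (aemeasurable_id'.prodMk hf) d
  rw [← hfst.map_eq] at hm ⊢
  exact (integral_map measurable_fst.aemeasurable hm).symm

lemma integrable_jointMonomial_graph (d : (ι → ℕ) × ℕ) :
    Integrable (fun p => jointMonomial d (p.1, f p.1)) φ :=
  integrable_jointMonomial_comp
    (measurable_fst.aemeasurable.prodMk (hφ.aemeasurable_comp_fst hf hlam))
    (hφ.ae_graph_mem hlam) d

lemma integrable_snd_sub : Integrable (fun p => p.2 - f p.1) φ := by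
  have hsnd := integrable_jointMonomial_comp aemeasurable_id' hφ.ae_mem (0, 1)
  have hgraph := hφ.integrable_jointMonomial_graph hf hlam (0, 1)
  simp only [jointMonomial, Pi.zero_apply, pow_zero, Finset.prod_const_one, pow_one, one_mul]
    at hsnd hgraph
  exact hsnd.sub hgraph

theorem integral_comp_fst_mul_snd_sub_eq_zero {g : (ι → ℝ) → ℝ} (hg : AEStronglyMeasurable g lam)
    (hgi : Integrable (fun p => g p.1 * (p.2 - f p.1)) φ) :
    ∫ p, g p.1 * (p.2 - f p.1) ∂φ = 0 := by
  have hfst := hφ.measurePreserving_fst hlam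
  refine integral_comp_mul_eq_zero_of_moment_eq_zero isCompact_Icc measurable_fst
    (hφ.ae_mem.mono fun p hp => hp.1) (hφ.integrable_snd_sub hf hlam) (fun a => ?_)
    (hfst.map_eq.symm ▸ hg) hgi
  calc ∫ p, (∏ i, p.1 i ^ a i) * (p.2 - f p.1) ∂φ
      = ∫ p, (jointMonomial (a, 1) p - jointMonomial (a, 1) (p.1, f p.1)) ∂φ := by
        simp only [jointMonomial, pow_one, mul_sub]
    _ = 0 := by
        rw [integral_sub (integrable_jointMonomial_comp aemeasurable_id' hφ.ae_mem _)
          (hφ.integrable_jointMonomial_graph hf hlam _),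
          hφ.integral_jointMonomial_graph hf hlam, hφ.integral_eq _ le_rfl, sub_self]

lemma integrable_prod_pow_mul_snd_sub (a : ι → ℕ) (j : ℕ) :
    Integrable (fun p => (∏ i, p.1 i ^ a i) * f p.1 ^ j * (p.2 - f p.1)) φ :=
  (hφ.integrable_snd_sub hf hlam).bdd_mul
    (hφ.integrable_jointMonomial_graph hf hlam (a, j)).aestronglyMeasurable
    ((hφ.ae_graph_mem hlam).mono fun _ hp => abs_jointMonomial_le hp (a, j))

lemma integrable_prod_pow_mul_powBregman (a : ι → ℕ) (k : ℕ) :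
    Integrable (fun p => (∏ i, p.1 i ^ a i) * powBregman k (f p.1) p.2) φ :=
  integrable_mul_powBregman (integrable_jointMonomial_comp aemeasurable_id' hφ.ae_mem (a, k))
    (hφ.integrable_jointMonomial_graph hf hlam (a, k))
    (hφ.integrable_prod_pow_mul_snd_sub hf hlam a (k - 1))

theorem integral_prod_pow_mul_powBregman (a : ι → ℕ) (k : ℕ) :
    ∫ p, (∏ i, p.1 i ^ a i) * powBregman k (f p.1) p.2 ∂φ =
      ∫ p, jointMonomial (a, k) p ∂φ - ∫ x, jointMonomial (a, k) (x, f x) ∂lam := by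
  have hlin := hφ.integrable_prod_pow_mul_snd_sub hf hlam a (k - 1)
  rw [← hφ.integral_jointMonomial_graph hf hlam]
  exact integral_mul_powBregman (integrable_jointMonomial_comp aemeasurable_id' hφ.ae_mem (a, k))
    (hφ.integrable_jointMonomial_graph hf hlam (a, k)) hlin
    (hφ.integral_comp_fst_mul_snd_sub_eq_zero hf hlam
      (aestronglyMeasurable_jointMonomial_comp (aemeasurable_id'.prodMk hf) (a, k - 1)) hlin)

theorem hasSum_integral_monomialSeries_sub {θ : (ι → ℕ) × ℕ → ℝ}
    (hsum : Summable fun d => θ d * γ ^ d.2) :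
    HasSum (fun d => θ d * ∫ p, (∏ i, p.1 i ^ d.1 i) * powBregman d.2 (f p.1) p.2 ∂φ)
      (∫ p, monomialSeries θ p ∂φ - ∫ p, monomialSeries θ p ∂(lam.map fun x => (x, f x))) := by
  have hgraph : AEMeasurable (fun x => (x, f x)) lam := aemeasurable_id'.prodMk hf
  have hbox : ∀ᵐ p ∂(lam.map fun x => (x, f x)), p ∈ Icc 0 1 ×ˢ Icc 0 γ :=
    (ae_map_iff hgraph (measurableSet_Icc.prod measurableSet_Icc)).2 hlam
  have hterm (d : (ι → ℕ) × ℕ) :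
      θ d * ∫ p, (∏ i, p.1 i ^ d.1 i) * powBregman d.2 (f p.1) p.2 ∂φ =
        θ d * ∫ p, jointMonomial d p ∂φ -
          θ d * ∫ p, jointMonomial d p ∂(lam.map fun x => (x, f x)) := by
    rw [hφ.integral_prod_pow_mul_powBregman hf hlam, ← mul_sub,
      integral_map hgraph (measurable_jointMonomial d).aestronglyMeasurable]
  simpa only [hterm] using (hasSum_integral_monomialSeries hsum hφ.ae_mem).sub
    (hasSum_integral_monomialSeries hsum hbox)

theorem eq_map_graph_of_integral_powBregman_eq_zero {k : ℕ} (hk : 2 ≤ k)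
    (hzero : ∫ p, powBregman k (f p.1) p.2 ∂φ = 0) : φ = lam.map fun x => (x, f x) := by
  have hfst := (hφ.measurePreserving_fst hlam).map_eq
  have hint : Integrable (fun p => powBregman k (f p.1) p.2) φ := by
    simpa using hφ.integrable_prod_pow_mul_powBregman hf hlam 0 k
  have hae := (integral_eq_zero_iff_of_nonneg_ae (hφ.ae_powBregman_nonneg hlam k) hint).1 hzero
  conv_rhs => rw [← hfst]
  refine eq_map_graph_of_ae_snd_eq (hfst.symm ▸ hf) ?_
  filter_upwards [hφ.ae_mem, hφ.ae_graph_mem hlam, hae] with p hp hfp hB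
  by_contra hne
  exact (powBregman_pos hk hfp.2.1 hp.2.1 (Ne.symm hne)).ne' hB

end IsFeasible

theorem graph_measure_unique_optimal_general {γ : ℝ} {lam : Measure (ι → ℝ)} [IsFiniteMeasure lam]
    {f : (ι → ℝ) → ℝ} (hf : AEMeasurable f lam)
    (hlam : ∀ᵐ x ∂lam, (x, f x) ∈ Icc 0 1 ×ˢ Icc 0 γ)
    {θ : (ι → ℕ) × ℕ → ℝ} (hθ : ∀ d, 0 ≤ θ d) {k : ℕ} (hk : 2 ≤ k) (hθk : 0 < θ (0, k))
    (hsum : Summable fun d => θ d * γ ^ d.2)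
    {φ : Measure ((ι → ℝ) × ℝ)} [IsFiniteMeasure φ] (hφ : IsFeasible γ lam f φ) :
    (∫ p, monomialSeries θ p ∂(lam.map fun x => (x, f x)) ≤ ∫ p, monomialSeries θ p ∂φ) ∧
      (∫ p, monomialSeries θ p ∂φ = ∫ p, monomialSeries θ p ∂(lam.map fun x => (x, f x)) →
        φ = lam.map fun x => (x, f x)) := by
  have hgap := hφ.hasSum_integral_monomialSeries_sub hf hlam hsum
  have hnonneg (d : (ι → ℕ) × ℕ) :
      0 ≤ θ d * ∫ p, (∏ i, p.1 i ^ d.1 i) * powBregman d.2 (f p.1) p.2 ∂φ :=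
    mul_nonneg (hθ d) (hφ.integral_prod_pow_mul_powBregman_nonneg hlam d.1 d.2)
  refine ⟨sub_nonneg.1 (hgap.nonneg hnonneg), fun heq => ?_⟩
  rw [heq, sub_self, hasSum_zero_iff_of_nonneg hnonneg] at hgap
  have hk_zero := (mul_eq_zero.1 (congrFun hgap (0, k))).resolve_left hθk.ne'
  exact hφ.eq_map_graph_of_integral_powBregman_eq_zero hf hlam hk (by simpa using hk_zero)

end GraphMeasure

/-- With strictly positive summable weights `θ`, the graph measure
`μ = δ_{f(x)}(dy) λ(dx)` (realized as the pushforward of `λ` by `x ↦ (x, f x)`) is the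
unique optimal solution of the LP minimizing `∫ T dφ` over finite nonnegative Borel
measures `φ` on `X × Y` whose moments of index `(d_x, d_y)` with `d_y ≤ 1` match those of
`μ`: every feasible `φ` satisfies `∫ T dμ ≤ ∫ T dφ`, with equality only if `φ = μ`. -/
theorem graph_measure_unique_optimal
    (n : ℕ) (hn : 1 ≤ n)
    (X : Set (Fin n → ℝ)) (hXsub : X ⊆ Icc 0 1) (hXc : IsCompact X)
    (γ : ℝ) (hγ : 0 < γ)
    (lam : Measure (Fin n → ℝ)) [IsProbabilityMeasure lam] (hlam : lam Xᶜ = 0)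
    (f : (Fin n → ℝ) → ℝ) (hf : Measurable f) (hfY : ∀ x ∈ X, f x ∈ Icc 0 γ)
    (θ : ((Fin n → ℕ) × ℕ) → ℝ) (hθ : ∀ d, 0 < θ d)
    (hsum : Summable fun d : (Fin n → ℕ) × ℕ => θ d * max 1 γ ^ d.2)
    (T : (Fin n → ℝ) × ℝ → ℝ)
    (hT : ∀ p : (Fin n → ℝ) × ℝ,
      T p = ∑' d : (Fin n → ℕ) × ℕ, θ d * ((∏ i, p.1 i ^ d.1 i) * p.2 ^ d.2))
    (μ : Measure ((Fin n → ℝ) × ℝ)) (hμ : μ = lam.map fun x => (x, f x)) :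
    ∀ φ : Measure ((Fin n → ℝ) × ℝ), IsFiniteMeasure φ →
      φ ((X ×ˢ Icc (0:ℝ) γ)ᶜ) = 0 →
      (∀ d : (Fin n → ℕ) × ℕ, d.2 ≤ 1 →
        ∫ p : (Fin n → ℝ) × ℝ, (∏ i, p.1 i ^ d.1 i) * p.2 ^ d.2 ∂φ
          = ∫ x, (∏ i, x i ^ d.1 i) * f x ^ d.2 ∂lam) →
      (∫ p, T p ∂μ ≤ ∫ p, T p ∂φ) ∧ ((∫ p, T p ∂φ) = ∫ p, T p ∂μ → φ = μ) := by
  intro φ _ hbox hmom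
  obtain rfl : T = monomialSeries θ := funext hT
  subst hμ
  have hY : Icc 0 γ ⊆ Icc 0 (max 1 γ) := Icc_subset_Icc_right (le_max_right 1 γ)
  have hlam_ae : ∀ᵐ x ∂lam, x ∈ X := hlam
  have hφ_ae : ∀ᵐ p ∂φ, p ∈ X ×ˢ Icc 0 γ := hbox
  exact graph_measure_unique_optimal_general (γ := max 1 γ) hf.aemeasurable
    (hlam_ae.mono fun x hx => ⟨hXsub hx, hY (hfY x hx)⟩) (fun d => (hθ d).le) le_rfl (hθ (0, 2))
    hsum ⟨hφ_ae.mono fun _ hp => prod_mono hXsub hY hp, hmom⟩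
end
end

section
/- For a finite nonnegative Borel measure φ on X×Y, define A₁φ to be its marginal on X (A₁φ(B) = φ(B×Y)) and A₂φ to be the measure on X given by A₂φ(B) = ∫_{B×Y} y dφ(x,y). If (φ_k) is a sequence of finite nonnegative Borel measures on X×Y such that A₁φ_k converges weakly (i.e. ∫ h d(A₁φ_k) → ∫ h da for every continuous h on X) to a finite nonnegative measure a, A₂φ_k converges weakly to a finite nonnegative measure b, and ∫ T dφ_k converges to c ∈ ℝ, then there exists a finite nonnegative Borel measure ψ on X×Y with a = A₁ψ, b = A₂ψ and c = ∫ T dψ. -/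
open MeasureTheory Set Filter Topology

noncomputable section

/-- The marginal `A₁φ` on `X` of a measure `φ` on `X × Y` : `A₁φ(B) = φ(B × Y)`. -/
def A1 {n : ℕ} (φ : Measure ((Fin n → ℝ) × ℝ)) : Measure (Fin n → ℝ) :=
  φ.map Prod.fst

/-- The measure `A₂φ` on `X` given by `A₂φ(B) = ∫_{B×Y} y dφ(x,y)`. -/
def A2 {n : ℕ} (φ : Measure ((Fin n → ℝ) × ℝ)) : Measure (Fin n → ℝ) :=
  (φ.withDensity fun p => ENNReal.ofReal p.2).map Prod.fst

/-!
The total masses of the `φ k` converge, being the integrals of `1` against the `A1 (φ k)`, so the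
`φ k` eventually lie in a weakly compact set of measures carried by the compact set `X × [0, γ]`.
They therefore converge weakly along an ultrafilter to some measure `ψ` on `X × [0, γ]`. The
functions `h(x)`, `y h(x)` and `T` are continuous there, hence by Tietze restrictions of bounded
continuous functions, so their integrals pass to the limit. Finally, a finite measure is determined
by its integrals of bounded continuous functions.
-/

open scoped NNReal BoundedContinuousFunction

theorem continuousOn_tsum_mul_prod_pow_mul_pow {σ 𝕜 : Type*} [Fintype σ] [NormedField 𝕜]
    [CompleteSpace 𝕜] {θ : (σ → ℕ) × ℕ → 𝕜} {r : σ → ℝ} {s : ℝ}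
    (hθ : Summable fun d => ‖θ d‖ * ((∏ i, r i ^ d.1 i) * s ^ d.2)) :
    ContinuousOn (fun p : (σ → 𝕜) × 𝕜 => ∑' d, θ d * ((∏ i, p.1 i ^ d.1 i) * p.2 ^ d.2))
      {p | (∀ i, ‖p.1 i‖ ≤ r i) ∧ ‖p.2‖ ≤ s} := by
  refine continuousOn_tsum (fun d => by fun_prop) hθ ?_
  rintro d p ⟨hx, hy⟩
  simp only [norm_mul, norm_prod, norm_pow]
  have hr (i : σ) : 0 ≤ r i := (norm_nonneg _).trans (hx i)
  gcongr with i
  · exact Finset.prod_nonneg fun i _ => pow_nonneg (hr i) _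
  · exact hx i

theorem continuousOn_tsum_mul_prod_pow_mul_pow_Icc {σ : Type*} [Fintype σ]
    {θ : (σ → ℕ) × ℕ → ℝ} {s : ℝ} (hθ : Summable fun d => θ d * s ^ d.2) :
    ContinuousOn (fun p : (σ → ℝ) × ℝ => ∑' d, θ d * ((∏ i, p.1 i ^ d.1 i) * p.2 ^ d.2))
      (Icc 0 1 ×ˢ Icc 0 s) := by
  have summable_norm : Summable fun d : (σ → ℕ) × ℕ =>
      ‖θ d‖ * ((∏ i, (1 : σ → ℝ) i ^ d.1 i) * |s| ^ d.2) := by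
    simpa using hθ.norm
  refine (continuousOn_tsum_mul_prod_pow_mul_pow summable_norm).mono ?_
  rintro p ⟨⟨hx0, hx1⟩, hy0, hys⟩
  exact ⟨fun i => (Real.norm_of_nonneg (hx0 i)).trans_le (hx1 i), abs_le_abs_of_nonneg hy0 hys⟩

theorem exists_boundedContinuousFunction_eqOn_of_isCompact {E : Type*} [TopologicalSpace E]
    [T2Space E] [NormalSpace E] {K : Set E} (hK : IsCompact K) {g : E → ℝ}
    (hg : ContinuousOn g K) : ∃ G : E →ᵇ ℝ, EqOn G g K := by
  have : CompactSpace K := isCompact_iff_compactSpace.mp hK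
  obtain ⟨G, -, hG⟩ := BoundedContinuousFunction.exists_norm_eq_domRestrict_eq_of_closed
    (BoundedContinuousFunction.mkOfCompact ⟨K.domRestrict g, hg.domRestrict⟩) hK.isClosed
  exact ⟨G, fun p hp => DFunLike.congr_fun hG ⟨p, hp⟩⟩

theorem integral_map_withDensity {α β G : Type*} [MeasurableSpace α] [MeasurableSpace β]
    [NormedAddCommGroup G] [NormedSpace ℝ G] {f : α → β} {w : α → ℝ≥0} {h : β → G}
    (hf : Measurable f) (hw : Measurable w) (hh : StronglyMeasurable h) (μ : Measure α) :
    ∫ x, h x ∂((μ.withDensity fun p => w p).map f) = ∫ p, w p • h (f p) ∂μ := by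
  rw [integral_map hf.aemeasurable hh.aestronglyMeasurable,
    integral_withDensity_eq_integral_smul hw]

section CompactlySupportedMeasures

variable {ι E F : Type*} {L : Filter ι}
  [TopologicalSpace E] [T2Space E] [MeasurableSpace E] [BorelSpace E]
  [TopologicalSpace F] [MeasurableSpace F] [BorelSpace F]
  {K : Set E} {f : E → F} {w : E → ℝ≥0}

theorem tendsto_integral_of_continuousOn_of_isCompact [NormalSpace E] (hK : IsCompact K)
    {μ : ι → FiniteMeasure E} {ψ : FiniteMeasure E} (hμ : ∀ k, (μ k : Measure E) Kᶜ = 0)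
    (hψ : (ψ : Measure E) Kᶜ = 0) (hlim : Tendsto μ L (𝓝 ψ)) {g : E → ℝ}
    (hg : ContinuousOn g K) :
    Tendsto (fun k => ∫ p, g p ∂(μ k : Measure E)) L (𝓝 (∫ p, g p ∂(ψ : Measure E))) := by
  obtain ⟨G, hG⟩ := exists_boundedContinuousFunction_eqOn_of_isCompact hK hg
  have integral_congr_G : ∀ ν : Measure E, ν Kᶜ = 0 → ∫ p, G p ∂ν = ∫ p, g p ∂ν :=
    fun ν hν => integral_congr_ae (hG.eventuallyEq_of_mem (mem_ae_iff.2 hν))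
  simpa only [integral_congr_G _ hψ, integral_congr_G _ (hμ _)]
    using FiniteMeasure.tendsto_iff_forall_integral_tendsto.1 hlim G

theorem exists_ultrafilter_tendsto_integral_of_isCompact [NormalSpace E] [L.NeBot]
    (hK : IsCompact K) {φ : ι → Measure E} [∀ k, IsFiniteMeasure (φ k)]
    (hφK : ∀ k, φ k Kᶜ = 0) (hφ : L.IsBoundedUnder (· ≤ ·) fun k => (φ k).real univ) :
    ∃ U : Ultrafilter ι, ↑U ≤ L ∧ ∃ ψ : Measure E, IsFiniteMeasure ψ ∧ ψ Kᶜ = 0 ∧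
      ∀ g : E → ℝ, ContinuousOn g K →
        Tendsto (fun k => ∫ p, g p ∂(φ k)) U (𝓝 (∫ p, g p ∂ψ)) := by
  let Φ : ι → FiniteMeasure E := fun k => ⟨φ k, inferInstance⟩
  obtain ⟨C, hC⟩ := hφ.eventually_le
  have mem_compact : ∀ᶠ k in L,
      Φ k ∈ {μ : FiniteMeasure E | μ.mass ≤ C.toNNReal ∧ μ Kᶜ = 0} := by
    filter_upwards [hC] with k hk
    exact ⟨NNReal.le_toNNReal_of_coe_le hk,
      (FiniteMeasure.null_iff_toMeasure_null _ _).2 (hφK k)⟩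
  obtain ⟨ψ, ⟨-, hψK⟩, hψ⟩ := (isCompact_setOfPred_finiteMeasure_le_of_isCompact C.toNNReal
    hK).exists_mapClusterPt_of_frequently mem_compact.frequently
  rw [FiniteMeasure.null_iff_toMeasure_null] at hψK
  obtain ⟨U, hUL, hU⟩ := mapClusterPt_iff_ultrafilter.1 hψ
  exact ⟨U, hUL, ψ, inferInstance, hψK, fun g hg =>
    tendsto_integral_of_continuousOn_of_isCompact hK (μ := Φ) hφK hψK hU hg⟩

theorem isFiniteMeasure_withDensity_of_continuousOn (hK : IsCompact K) {μ : Measure E}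
    [IsFiniteMeasureOnCompacts μ] (hμ : μ Kᶜ = 0) (hw : ContinuousOn w K) :
    IsFiniteMeasure (μ.withDensity fun p => w p) := by
  have integrable_w : Integrable (fun p => (w p : ℝ)) μ := by
    rw [← Measure.restrict_eq_self_of_ae_mem (mem_ae_iff.2 hμ)]
    exact (NNReal.continuous_coe.comp_continuousOn hw).integrableOn_compact hK
  simpa only [ENNReal.ofReal_coe_nnreal] using isFiniteMeasure_withDensity_ofReal integrable_w.2

theorem eq_map_withDensity_of_tendsto [HasOuterApproxClosed F] [L.NeBot] (hK : IsCompact K)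
    (hf : Continuous f) (hw : Continuous w) {φ : ι → Measure E} {ψ : Measure E}
    [IsFiniteMeasure ψ] (hψK : ψ Kᶜ = 0)
    (hφψ : ∀ g : E → ℝ, ContinuousOn g K →
      Tendsto (fun k => ∫ p, g p ∂(φ k)) L (𝓝 (∫ p, g p ∂ψ)))
    {a : Measure F} [IsFiniteMeasure a]
    (ha : ∀ h : F →ᵇ ℝ,
      Tendsto (fun k => ∫ x, h x ∂(((φ k).withDensity fun p => w p).map f)) L
        (𝓝 (∫ x, h x ∂a))) :
    a = (ψ.withDensity fun p => w p).map f := by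
  have := isFiniteMeasure_withDensity_of_continuousOn hK hψK hw.continuousOn
  refine ext_of_forall_integral_eq_of_IsFiniteMeasure fun h => tendsto_nhds_unique (ha h) ?_
  simp only [integral_map_withDensity hf.measurable hw.measurable
    h.continuous.stronglyMeasurable]
  exact hφψ _ (by fun_prop)

/-- Here `f` stands for the projection to `X`, `w` for the coordinate `y`, and `T` for the power
series. -/
theorem closedness_of_moment_cone_general [NormalSpace E] [HasOuterApproxClosed F] [L.NeBot]
    (hK : IsCompact K) (hf : Continuous f) (hw : Continuous w) {T : E → ℝ}
    (hT : ContinuousOn T K) {φ : ι → Measure E} [∀ k, IsFiniteMeasure (φ k)]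
    (hφK : ∀ k, φ k Kᶜ = 0) {a b : Measure F} [IsFiniteMeasure a] [IsFiniteMeasure b] {c : ℝ}
    (ha : ∀ h : F →ᵇ ℝ,
      Tendsto (fun k => ∫ x, h x ∂((φ k).map f)) L (𝓝 (∫ x, h x ∂a)))
    (hb : ∀ h : F →ᵇ ℝ,
      Tendsto (fun k => ∫ x, h x ∂(((φ k).withDensity fun p => w p).map f)) L
        (𝓝 (∫ x, h x ∂b)))
    (hc : Tendsto (fun k => ∫ p, T p ∂(φ k)) L (𝓝 c)) :
    ∃ ψ : Measure E, IsFiniteMeasure ψ ∧ ψ Kᶜ = 0 ∧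
      a = ψ.map f ∧ b = (ψ.withDensity fun p => w p).map f ∧ c = ∫ p, T p ∂ψ := by
  have tendsto_mass : Tendsto (fun k => (φ k).real univ) L (𝓝 (a.real univ)) := by
    simpa [map_measureReal_apply hf.measurable MeasurableSet.univ] using ha 1
  obtain ⟨U, hUL, ψ, hψ, hψK, hφψ⟩ :=
    exists_ultrafilter_tendsto_integral_of_isCompact hK hφK tendsto_mass.isBoundedUnder_le
  refine ⟨ψ, hψ, hψK, ?_, ?_, tendsto_nhds_unique (hc.mono_left hUL) (hφψ T hT)⟩
  · simpa using eq_map_withDensity_of_tendsto (w := 1) hK hf continuous_one hψK hφψ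
      (fun h => by simpa using (ha h).mono_left hUL)
  · exact eq_map_withDensity_of_tendsto hK hf hw hψK hφψ fun h => (hb h).mono_left hUL

end CompactlySupportedMeasures

/-- Weak-star closedness of the set
`{(A₁φ, A₂φ, ∫ T dφ) : φ finite nonnegative Borel measure on X × Y}`. -/
theorem closedness_of_moment_cone
    (n : ℕ) (hn : 1 ≤ n)
    (X : Set (Fin n → ℝ)) (hXsub : X ⊆ Icc 0 1) (hXc : IsCompact X)
    (γ : ℝ) (hγ : 0 < γ)
    (θ : ((Fin n → ℕ) × ℕ) → ℝ) (hθ : ∀ d, 0 ≤ θ d)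
    (hsum : Summable fun d : (Fin n → ℕ) × ℕ => θ d * max 1 γ ^ d.2)
    (T : (Fin n → ℝ) × ℝ → ℝ)
    (hT : ∀ p : (Fin n → ℝ) × ℝ,
      T p = ∑' d : (Fin n → ℕ) × ℕ, θ d * ((∏ i, p.1 i ^ d.1 i) * p.2 ^ d.2))
    (φ : ℕ → Measure ((Fin n → ℝ) × ℝ))
    (hφfin : ∀ k, IsFiniteMeasure (φ k))
    (hφsupp : ∀ k, φ k ((X ×ˢ Icc (0:ℝ) γ)ᶜ) = 0)
    (a b : Measure (Fin n → ℝ)) (hafin : IsFiniteMeasure a) (hbfin : IsFiniteMeasure b)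
    (c : ℝ)
    (ha : ∀ h : (Fin n → ℝ) → ℝ, Continuous h →
      Tendsto (fun k => ∫ x, h x ∂(A1 (φ k))) atTop (𝓝 (∫ x, h x ∂a)))
    (hb : ∀ h : (Fin n → ℝ) → ℝ, Continuous h →
      Tendsto (fun k => ∫ x, h x ∂(A2 (φ k))) atTop (𝓝 (∫ x, h x ∂b)))
    (hc : Tendsto (fun k => ∫ p, T p ∂(φ k)) atTop (𝓝 c)) :
    ∃ ψ : Measure ((Fin n → ℝ) × ℝ), IsFiniteMeasure ψ ∧
      ψ ((X ×ˢ Icc (0:ℝ) γ)ᶜ) = 0 ∧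
      a = A1 ψ ∧ b = A2 ψ ∧ c = ∫ p, T p ∂ψ := by
  have hTK : ContinuousOn T (X ×ˢ Icc (0:ℝ) γ) := funext hT ▸
    (continuousOn_tsum_mul_prod_pow_mul_pow_Icc hsum).mono
      (prod_mono hXsub (Icc_subset_Icc_right (le_max_right 1 γ)))
  exact closedness_of_moment_cone_general (hXc.prod isCompact_Icc) continuous_fst
    (continuous_real_toNNReal.comp continuous_snd) hTK hφsupp (fun h => ha h h.continuous)
    (fun h => hb h h.continuous) hc
end
end

section
/- For every r ≥ max_j d_j, every sequence φ = (φ_d)_{d ∈ ℕ^{n+1}_{2r}} that is feasible at order r satisfies |φ_d| ≤ max(1, γ^{2r}) for all d ∈ ℕ^{n+1}_{2r}; in particular, the feasible set of the order-r relaxation is a compact subset of ℝ^{ℕ^{n+1}_{2r}}. -/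
open MeasureTheory Set

noncomputable section

/-- Multi-indices `e ∈ ℕ^n` with `|e| ≤ r`. -/
def xIdx (n r : ℕ) : Finset (Fin n → ℕ) :=
  Finset.filter (fun e => ∑ i, e i ≤ r) (Fintype.piFinset fun _ : Fin n => Finset.range (r + 1))

/-- Evaluation of a polynomial in `x` of degree `≤ r` given by its coefficients `c`. -/
def polyEval (n r : ℕ) (c : (Fin n → ℕ) → ℝ) (x : Fin n → ℝ) : ℝ :=
  ∑ e ∈ xIdx n r, c e * ∏ i, x i ^ e i

/-- The moment matrix `M_r(φ)`, with rows and columns indexed by `ℕ^{n+1}_r`. -/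
def momMat (n r : ℕ) (φ : ((Fin n → ℕ) × ℕ) → ℝ) : Matrix (idx n r) (idx n r) ℝ :=
  fun a b => φ (fun i => a.1.1 i + b.1.1 i, a.1.2 + b.1.2)

/-- The localizing matrix `M_{r−t}(g φ)` of a polynomial `g` in `x` with coefficients `c`
and degree `≤ 2t`. -/
def locMatX (n : ℕ) (c : (Fin n → ℕ) → ℝ) (t r : ℕ) (φ : ((Fin n → ℕ) × ℕ) → ℝ) :
    Matrix (idx n (r - t)) (idx n (r - t)) ℝ :=
  fun a b => ∑ e ∈ xIdx n (2 * t),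
    c e * φ (fun i => e i + a.1.1 i + b.1.1 i, a.1.2 + b.1.2)

/-- The localizing matrix `M_{r−1}(g_{m+1} φ)` of the polynomial `g_{m+1}(x,y) = y(γ−y)`. -/
def locMatY (n : ℕ) (γ : ℝ) (r : ℕ) (φ : ((Fin n → ℕ) × ℕ) → ℝ) :
    Matrix (idx n (r - 1)) (idx n (r - 1)) ℝ :=
  fun a b => γ * φ (fun i => a.1.1 i + b.1.1 i, a.1.2 + b.1.2 + 1)
    - φ (fun i => a.1.1 i + b.1.1 i, a.1.2 + b.1.2 + 2)

/-- Feasibility of a pseudo-moment sequence `φ` at relaxation order `r`: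
`M_r(φ) ⪰ 0`, `M_{r−d_j}(g_j φ) ⪰ 0` for `j = 1,…,m+1`, and `φ_d = μ_d` for all
`d ∈ D = {d : d_y ≤ 1}` with `|d| ≤ 2r`. -/
def Feasible (n m : ℕ) (γ : ℝ) (g : Fin m → (Fin n → ℕ) → ℝ) (t : Fin m → ℕ)
    (μmom : ((Fin n → ℕ) × ℕ) → ℝ) (r : ℕ) (φ : ((Fin n → ℕ) × ℕ) → ℝ) : Prop :=
  (momMat n r φ).PosSemidef ∧
  (∀ j, (locMatX n (g j) (t j) r φ).PosSemidef) ∧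
  (locMatY n γ r φ).PosSemidef ∧
  ∀ d : (Fin n → ℕ) × ℕ, d.2 ≤ 1 → (∑ i, d.1 i) + d.2 ≤ 2 * r → φ d = μmom d

/-!
Positive semidefiniteness of `M_r(φ)` bounds every entry by the largest diagonal entry, so it
suffices to bound `φ(x^{2α} y^{2k})`. The constraint `y(γ - y) ≥ 0` and the Cauchy–Schwarz
inequality give `φ(x^{2α} y^{2k+2}) ≤ γ² φ(x^{2α} y^{2k})`, which descends to the prescribed
moments `φ(x^{2α}) = ∫ x^{2α} dλ ≤ 1`. Compactness follows, since feasibility is a closed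
condition on finitely many coordinates.
-/

section PosSemidef

lemma posSemidef_sq_apply_le {ι : Type*} {M : Matrix ι ι ℝ} (hM : M.PosSemidef) (a b : ι) :
    M a b ^ 2 ≤ M a a * M b b := by
  have hdet := (hM.submatrix ![a, b]).det_nonneg
  have hsymm : M b a = M a b := hM.isHermitian.apply a b
  simp only [Matrix.det_fin_two, Matrix.submatrix_apply, Matrix.cons_val_zero,
    Matrix.cons_val_one, hsymm] at hdet
  linarith

lemma abs_apply_le_of_posSemidef {ι : Type*} {M : Matrix ι ι ℝ} (hM : M.PosSemidef) {B : ℝ}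
    (hdiag : ∀ a, M a a ≤ B) (a b : ι) : |M a b| ≤ B := by
  have hB : 0 ≤ B := hM.diag_nonneg.trans (hdiag a)
  refine abs_le_of_sq_le_sq ?_ hB
  calc M a b ^ 2 ≤ M a a * M b b := posSemidef_sq_apply_le hM a b
    _ ≤ B * B := mul_le_mul (hdiag a) (hdiag b) hM.diag_nonneg hB
    _ = B ^ 2 := (sq B).symm

lemma isClosed_setOf_posSemidef {ι R : Type*} [Finite ι] [CommRing R] [PartialOrder R]
    [StarRing R] [TopologicalSpace R] [IsTopologicalSemiring R] [ContinuousStar R]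
    [OrderClosedTopology R] : IsClosed {M : Matrix ι ι R | M.PosSemidef} := by
  cases nonempty_fintype ι
  simp only [Matrix.posSemidef_iff_dotProduct_mulVec, Matrix.IsHermitian, ofPred_and, ofPred_forall]
  refine (isClosed_eq continuous_id.matrix_conjTranspose continuous_id).inter
    (isClosed_iInter fun v => isClosed_le continuous_const ?_)
  exact continuous_const.dotProduct (continuous_id.matrix_mulVec continuous_const)

end PosSemidef

section OrderedField

variable {K : Type*} [Field K] [LinearOrder K] [IsStrictOrderedRing K]

lemma le_sq_mul_of_le_mul_of_sq_le_mul {c p q s : K} (hp : 0 ≤ p) (hq : 0 ≤ q)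
    (hqs : q ≤ c * s) (hspq : s ^ 2 ≤ p * q) : q ≤ c ^ 2 * p := by
  rcases hq.eq_or_lt with rfl | hq_pos
  · positivity
  · refine le_of_mul_le_mul_right ?_ hq_pos
    calc q * q ≤ (c * s) * (c * s) := mul_self_le_mul_self hq hqs
      _ = c ^ 2 * s ^ 2 := by ring
      _ ≤ c ^ 2 * (p * q) := by gcongr
      _ = c ^ 2 * p * q := by ring

lemma pow_le_max_one_pow {x : K} (hx : 0 ≤ x) {k l : ℕ} (hkl : k ≤ l) :
    x ^ k ≤ max 1 (x ^ l) := by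
  rcases le_total x 1 with h | h
  · exact (pow_le_one₀ hx h).trans (le_max_left _ _)
  · exact (pow_le_pow_right₀ h hkl).trans (le_max_right _ _)

end OrderedField

lemma continuous_extend_zero {ι κ R : Type*} [TopologicalSpace R] [Zero R] (e : ι → κ) :
    Continuous fun ψ : ι → R => Function.extend e ψ 0 := by
  classical
  refine continuous_pi fun k => ?_
  simp only [Function.extend_def]
  split_ifs with h
  · exact continuous_apply _
  · exact continuous_const

lemma abs_integral_prod_pow_le {ι : Type*} [Fintype ι] {ν : Measure (ι → ℝ)} [IsFiniteMeasure ν]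
    (hν : ∀ᵐ x ∂ν, x ∈ Icc (-1) 1) (α : ι → ℕ) : |∫ x, ∏ i, x i ^ α i ∂ν| ≤ ν.real univ := by
  have hbound : ∀ᵐ x ∂ν, ‖∏ i, x i ^ α i‖ ≤ 1 := by
    filter_upwards [hν] with x hx
    rw [norm_prod]
    refine Finset.prod_le_one (fun _ _ => norm_nonneg _) fun i _ => ?_
    rw [norm_pow]
    exact pow_le_one₀ (norm_nonneg _) (abs_le.2 ⟨hx.1 i, hx.2 i⟩)
  simpa only [Real.norm_eq_abs, one_mul] using norm_integral_le_of_norm_le_const hbound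

lemma exists_le_sum_eq {ι : Type*} [Fintype ι] (d : ι → ℕ) {k : ℕ} (hk : k ≤ ∑ i, d i) :
    ∃ a ≤ d, ∑ i, a i = k := by
  obtain ⟨a, had, ha⟩ := Finsupp.exists_le_degree_eq (Finsupp.equivFunOnFinite.symm d) k
    (by simpa [Finsupp.degree_eq_sum] using hk)
  exact ⟨a, had, by rw [← ha, Finsupp.degree_eq_sum]⟩

section MultiIndex

variable {n r s : ℕ}

lemma mem_xIdx {α : Fin n → ℕ} : α ∈ xIdx n r ↔ ∑ i, α i ≤ r := by
  simp only [xIdx, Finset.mem_filter, Fintype.mem_piFinset, Finset.mem_range,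
    and_iff_right_iff_imp]
  intro h i
  have := Finset.single_le_sum (f := α) (fun _ _ => Nat.zero_le _) (Finset.mem_univ i)
  omega

lemma mem_idx {d : (Fin n → ℕ) × ℕ} : d ∈ idx n r ↔ (∑ i, d.1 i) + d.2 ≤ r := by
  simp only [idx, Finset.mem_filter, Finset.mem_product, Fintype.mem_piFinset, Finset.mem_range,
    and_iff_right_iff_imp]
  intro h
  refine ⟨fun i => ?_, by omega⟩
  have := Finset.single_le_sum (f := d.1) (fun _ _ => Nat.zero_le _) (Finset.mem_univ i)
  omega

lemma add_mem_idx {a b : (Fin n → ℕ) × ℕ} (ha : a ∈ idx n r) (hb : b ∈ idx n s) :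
    a + b ∈ idx n (r + s) := by
  simp only [mem_idx, Prod.fst_add, Prod.snd_add, Pi.add_apply, Finset.sum_add_distrib] at *
  omega

lemma idx_mono (h : r ≤ s) : idx n r ⊆ idx n s :=
  fun _ hd => mem_idx.2 ((mem_idx.1 hd).trans h)

lemma exists_mem_idx_add_eq {d : (Fin n → ℕ) × ℕ} (hd : d ∈ idx n (r + s)) :
    ∃ a ∈ idx n r, ∃ b ∈ idx n s, a + b = d := by
  obtain ⟨α, k⟩ := d
  rw [mem_idx] at hd
  obtain ⟨β, hβα, hβ⟩ := exists_le_sum_eq α (min_le_right r (∑ i, α i))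
  have hsum : ∑ i, (α - β) i + ∑ i, β i = ∑ i, α i := by
    rw [← Finset.sum_add_distrib]
    exact Finset.sum_congr rfl fun i _ => Nat.sub_add_cancel (hβα i)
  set l := min k (r - ∑ i, β i)
  refine ⟨(β, l), mem_idx.2 ?_, (α - β, k - l), mem_idx.2 ?_, ?_⟩
  · dsimp only; omega
  · dsimp only at hd ⊢; omega
  · exact Prod.ext (add_tsub_cancel_of_le hβα) (add_tsub_cancel_of_le (min_le_left _ _))

end MultiIndex

section PseudoMoments

variable {n r : ℕ} {γ C : ℝ} {φ φ' : (Fin n → ℕ) × ℕ → ℝ}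

lemma pseudoMoment_add_self_nonneg (hM : (momMat n r φ).PosSemidef) {a : (Fin n → ℕ) × ℕ}
    (ha : a ∈ idx n r) : 0 ≤ φ (a + a) :=
  hM.diag_nonneg (i := ⟨a, ha⟩)

lemma pseudoMoment_even_succ_le (hM : (momMat n r φ).PosSemidef) (hY : (locMatY n γ r φ).PosSemidef)
    {α : Fin n → ℕ} {k : ℕ} (h : (α, k + 1) ∈ idx n r) :
    φ (α + α, 2 * (k + 1)) ≤ γ ^ 2 * φ (α + α, 2 * k) := by
  have hdeg : (α, k) ∈ idx n (r - 1) := mem_idx.2 (by have := mem_idx.1 h; dsimp only at *; omega)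
  have hk : (α, k) ∈ idx n r := idx_mono (Nat.sub_le r 1) hdeg
  have hloc : 0 ≤ γ * φ (α + α, k + k + 1) - φ (α + α, k + k + 2) :=
    hY.diag_nonneg (i := ⟨(α, k), hdeg⟩)
  have hcs : φ (α + α, k + (k + 1)) ^ 2
      ≤ φ (α + α, k + k) * φ (α + α, (k + 1) + (k + 1)) :=
    posSemidef_sq_apply_le hM ⟨(α, k), hk⟩ ⟨(α, k + 1), h⟩
  have hp : 0 ≤ φ (α + α, k + k) := pseudoMoment_add_self_nonneg hM hk
  have hq : 0 ≤ φ (α + α, (k + 1) + (k + 1)) := pseudoMoment_add_self_nonneg hM h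
  rw [two_mul, two_mul]
  refine le_sq_mul_of_le_mul_of_sq_le_mul hp hq ?_ hcs
  rw [show k + 1 + (k + 1) = k + k + 2 by ring, ← add_assoc]
  exact sub_nonneg.1 hloc

lemma pseudoMoment_even_le (hM : (momMat n r φ).PosSemidef) (hY : (locMatY n γ r φ).PosSemidef)
    (α : Fin n → ℕ) (k : ℕ) (h : (α, k) ∈ idx n r) :
    φ (α + α, 2 * k) ≤ γ ^ (2 * k) * φ (α + α, 0) := by
  induction k with
  | zero => simp
  | succ k ih =>
    have hk : (α, k) ∈ idx n r := mem_idx.2 (by have := mem_idx.1 h; dsimp only at *; omega)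
    calc φ (α + α, 2 * (k + 1)) ≤ γ ^ 2 * φ (α + α, 2 * k) := pseudoMoment_even_succ_le hM hY h
      _ ≤ γ ^ 2 * (γ ^ (2 * k) * φ (α + α, 0)) := by gcongr; exact ih hk
      _ = γ ^ (2 * (k + 1)) * φ (α + α, 0) := by ring

lemma momMat_diag_le (hM : (momMat n r φ).PosSemidef) (hY : (locMatY n γ r φ).PosSemidef)
    (hC : ∀ α ∈ xIdx n r, φ (α + α, 0) ≤ C) (a : idx n r) :
    momMat n r φ a a ≤ C * max 1 (γ ^ (2 * r)) := by
  obtain ⟨⟨α, k⟩, ha⟩ := a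
  have hdeg : ∑ i, α i + k ≤ r := mem_idx.1 ha
  have hα : φ (α + α, 0) ≤ C := hC α (mem_xIdx.2 (by omega))
  have hα_nonneg : 0 ≤ φ (α + α, 0) :=
    pseudoMoment_add_self_nonneg hM (a := (α, 0)) (mem_idx.2 (by dsimp only; omega))
  have hγ : γ ^ (2 * k) ≤ max 1 (γ ^ (2 * r)) := by
    rw [pow_mul, pow_mul]
    exact pow_le_max_one_pow (sq_nonneg γ) (by omega)
  calc φ (α + α, k + k) = φ (α + α, 2 * k) := by rw [two_mul]
    _ ≤ γ ^ (2 * k) * φ (α + α, 0) := pseudoMoment_even_le hM hY α k ha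
    _ ≤ max 1 (γ ^ (2 * r)) * C := mul_le_mul hγ hα hα_nonneg (by positivity)
    _ = C * max 1 (γ ^ (2 * r)) := mul_comm _ _

lemma abs_pseudoMoment_le (hM : (momMat n r φ).PosSemidef) (hY : (locMatY n γ r φ).PosSemidef)
    (hC : ∀ α ∈ xIdx n r, φ (α + α, 0) ≤ C) {d : (Fin n → ℕ) × ℕ} (hd : d ∈ idx n (2 * r)) :
    |φ d| ≤ C * max 1 (γ ^ (2 * r)) := by
  rw [two_mul] at hd
  obtain ⟨a, ha, b, hb, rfl⟩ := exists_mem_idx_add_eq hd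
  exact abs_apply_le_of_posSemidef hM (momMat_diag_le hM hY hC) ⟨a, ha⟩ ⟨b, hb⟩

lemma momMat_congr (h : EqOn φ φ' (idx n (2 * r))) : momMat n r φ = momMat n r φ' := by
  ext a b
  exact h (two_mul r ▸ add_mem_idx a.2 b.2)

lemma locMatX_congr {c : (Fin n → ℕ) → ℝ} {t : ℕ} (ht : t ≤ r)
    (h : EqOn φ φ' (idx n (2 * r))) : locMatX n c t r φ = locMatX n c t r φ' := by
  ext a b
  refine Finset.sum_congr rfl fun e he => congrArg (c e * ·) (h ?_)
  have ha := mem_idx.1 a.2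
  have hb := mem_idx.1 b.2
  have he := mem_xIdx.1 he
  simp only [Finset.mem_coe, mem_idx, Finset.sum_add_distrib]
  omega

lemma locMatY_congr (hr : 1 ≤ r) (h : EqOn φ φ' (idx n (2 * r))) :
    locMatY n γ r φ = locMatY n γ r φ' := by
  ext a b
  have ha := mem_idx.1 a.2
  have hb := mem_idx.1 b.2
  refine congrArg₂ (γ * · - ·) (h ?_) (h ?_) <;>
  · simp only [Finset.mem_coe, mem_idx, Finset.sum_add_distrib]
    omega

lemma continuous_momMat : Continuous (momMat n r) :=
  continuous_pi fun _ => continuous_pi fun _ => continuous_apply _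

lemma continuous_locMatX (c : (Fin n → ℕ) → ℝ) (t : ℕ) : Continuous (locMatX n c t r) :=
  continuous_pi fun _ => continuous_pi fun _ =>
    continuous_finsetSum _ fun _ _ => continuous_const.mul (continuous_apply _)

lemma continuous_locMatY : Continuous (locMatY n γ r) :=
  continuous_pi fun _ => continuous_pi fun _ =>
    (continuous_const.mul (continuous_apply _)).sub (continuous_apply _)

end PseudoMoments

section Feasible

variable {n m r : ℕ} {γ C : ℝ} {g : Fin m → (Fin n → ℕ) → ℝ} {t : Fin m → ℕ}
  {μmom φ φ' : (Fin n → ℕ) × ℕ → ℝ}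

lemma Feasible.congr (hφ : Feasible n m γ g t μmom r φ) (hr : 1 ≤ r) (ht : ∀ j, t j ≤ r)
    (h : EqOn φ φ' (idx n (2 * r))) : Feasible n m γ g t μmom r φ' := by
  obtain ⟨hM, hX, hY, hμ⟩ := hφ
  refine ⟨momMat_congr h ▸ hM, fun j => locMatX_congr (ht j) h ▸ hX j,
    locMatY_congr hr h ▸ hY, fun d hdy hd => ?_⟩
  rw [← h (mem_idx.2 hd), hμ d hdy hd]

lemma Feasible.abs_apply_le (hφ : Feasible n m γ g t μmom r φ)
    (hC : ∀ α ∈ xIdx n r, μmom (α + α, 0) ≤ C) {d : (Fin n → ℕ) × ℕ} (hd : d ∈ idx n (2 * r)) :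
    |φ d| ≤ C * max 1 (γ ^ (2 * r)) := by
  obtain ⟨hM, -, hY, hμ⟩ := hφ
  refine abs_pseudoMoment_le hM hY (fun α hα => ?_) hd
  have hdeg : (α, 0) + (α, 0) ∈ idx n (r + r) :=
    add_mem_idx (mem_idx.2 (mem_xIdx.1 hα)) (mem_idx.2 (mem_xIdx.1 hα))
  rw [hμ (α + α, 0) zero_le_one (two_mul r ▸ mem_idx.1 hdeg)]
  exact hC α hα

lemma isClosed_setOf_feasible : IsClosed {φ | Feasible n m γ g t μmom r φ} := by
  simp only [Feasible, ofPred_and, ofPred_forall]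
  refine (isClosed_setOf_posSemidef.preimage continuous_momMat).inter
    (.inter (isClosed_iInter fun j =>
      isClosed_setOf_posSemidef.preimage (continuous_locMatX (g j) (t j)))
    (.inter (isClosed_setOf_posSemidef.preimage continuous_locMatY) ?_))
  exact isClosed_iInter fun d => isClosed_iInter fun _ => isClosed_iInter fun _ =>
    isClosed_eq (continuous_apply d) continuous_const

lemma exists_feasible_restrict_eq_iff (hr : 1 ≤ r) (ht : ∀ j, t j ≤ r) (ψ : idx n (2 * r) → ℝ) :
    (∃ φ, Feasible n m γ g t μmom r φ ∧ ∀ d : idx n (2 * r), ψ d = φ d.1) ↔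
      Feasible n m γ g t μmom r (Function.extend Subtype.val ψ 0) := by
  have hext (d : idx n (2 * r)) : Function.extend Subtype.val ψ 0 d.1 = ψ d :=
    Subtype.val_injective.extend_apply ψ 0 d
  constructor
  · rintro ⟨φ, hφ, hψ⟩
    exact hφ.congr hr ht fun d hd => (hψ ⟨d, hd⟩).symm.trans (hext ⟨d, hd⟩).symm
  · exact fun h => ⟨_, h, fun d => (hext d).symm⟩

lemma isCompact_setOf_restrict_feasible (hr : 1 ≤ r) (ht : ∀ j, t j ≤ r) :
    IsCompact {ψ : idx n (2 * r) → ℝ |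
      ∃ φ, Feasible n m γ g t μmom r φ ∧ ∀ d : idx n (2 * r), ψ d = φ d.1} := by
  obtain ⟨C, hC⟩ : ∃ C, ∀ α ∈ xIdx n r, μmom (α + α, 0) ≤ C := by
    simpa only [Finset.forall_mem_image] using
      ((xIdx n r).image fun α => μmom (α + α, 0)).exists_le
  refine Metric.isCompact_of_isClosed_isBounded ?_ ?_
  · simp only [exists_feasible_restrict_eq_iff hr ht]
    exact isClosed_setOf_feasible.preimage (continuous_extend_zero _)
  · let B := C * max 1 (γ ^ (2 * r))
    refine (Metric.isBounded_Icc (fun _ => -B) fun _ => B).subset ?_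
    rintro ψ ⟨φ, hφ, hψ⟩
    have hψB (d : idx n (2 * r)) : |ψ d| ≤ B := hψ d ▸ hφ.abs_apply_le hC d.2
    exact ⟨fun d => (abs_le.1 (hψB d)).1, fun d => (abs_le.1 (hψB d)).2⟩

end Feasible

theorem feasible_set_bounded_compact_general {n m : ℕ} {γ C : ℝ} {g : Fin m → (Fin n → ℕ) → ℝ}
    {t : Fin m → ℕ} {μmom : (Fin n → ℕ) × ℕ → ℝ} {r : ℕ} (hr : 1 ≤ r) (ht : ∀ j, t j ≤ r)
    (hC : ∀ α ∈ xIdx n r, μmom (α + α, 0) ≤ C) :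
    (∀ φ, Feasible n m γ g t μmom r φ → ∀ d : (Fin n → ℕ) × ℕ, (∑ i, d.1 i) + d.2 ≤ 2 * r →
      |φ d| ≤ C * max 1 (γ ^ (2 * r))) ∧
    IsCompact {ψ : idx n (2 * r) → ℝ |
      ∃ φ, Feasible n m γ g t μmom r φ ∧ ∀ d : idx n (2 * r), ψ d = φ d.1} :=
  ⟨fun _ hφ _ hd => hφ.abs_apply_le hC (mem_idx.2 hd), isCompact_setOf_restrict_feasible hr ht⟩

/-- Every sequence feasible at order `r` is uniformly bounded by
`max(1, γ^{2r})` on indices of total degree `≤ 2r`; in particular the feasible set of the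
order-`r` relaxation (viewed in `ℝ^{ℕ^{n+1}_{2r}}`) is compact. -/
theorem feasible_set_bounded_compact
    (n m : ℕ) (hn : 1 ≤ n) (hm : 1 ≤ m)
    (γ : ℝ) (hγ : 0 < γ)
    (g : Fin m → (Fin n → ℕ) → ℝ) (t : Fin m → ℕ)
    (hgdeg : ∀ j e, 2 * t j < ∑ i, e i → g j e = 0)
    (hg1t : t ⟨0, hm⟩ = 1)
    (hg1 : ∀ x : Fin n → ℝ,
      polyEval n (2 * t ⟨0, hm⟩) (g ⟨0, hm⟩) x = (n : ℝ) - ∑ i, x i ^ 2)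
    (X : Set (Fin n → ℝ))
    (hXdef : X = {x | ∀ j, 0 ≤ polyEval n (2 * t j) (g j) x})
    (hXsub : X ⊆ Icc 0 1) (hXc : IsCompact X)
    (lam : Measure (Fin n → ℝ)) [IsProbabilityMeasure lam] (hlam : lam Xᶜ = 0)
    (f : (Fin n → ℝ) → ℝ) (hf : Measurable f) (hfY : ∀ x ∈ X, f x ∈ Icc 0 γ)
    (μmom : ((Fin n → ℕ) × ℕ) → ℝ)
    (hμmom : ∀ d : (Fin n → ℕ) × ℕ,
      μmom d = ∫ x, (∏ i, x i ^ d.1 i) * f x ^ d.2 ∂lam) :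
    ∀ r : ℕ, 1 ≤ r → (∀ j, t j ≤ r) →
      (∀ φ : ((Fin n → ℕ) × ℕ) → ℝ, Feasible n m γ g t μmom r φ →
        ∀ d : (Fin n → ℕ) × ℕ, (∑ i, d.1 i) + d.2 ≤ 2 * r →
          |φ d| ≤ max 1 (γ ^ (2 * r))) ∧
      IsCompact {ψ : idx n (2 * r) → ℝ |
        ∃ φ : ((Fin n → ℕ) × ℕ) → ℝ, Feasible n m γ g t μmom r φ ∧
          ∀ d : idx n (2 * r), ψ d = φ d.1} := by
  intro r hr ht
  have hcube : ∀ᵐ x ∂lam, x ∈ Icc (-1) 1 :=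
    Filter.mem_of_superset (mem_ae_iff.2 hlam)
      (hXsub.trans (Icc_subset_Icc_left (neg_nonpos.2 zero_le_one)))
  have hmom (α : Fin n → ℕ) : μmom (α, 0) ≤ 1 := by
    simpa only [hμmom, pow_zero, mul_one, probReal_univ] using
      (le_abs_self _).trans (abs_integral_prod_pow_le hcube α)
  simpa only [one_mul] using feasible_set_bounded_compact_general hr ht fun α _ => hmom (α + α)
end
end
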